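/- arXiv:2102.08806 — 2 statements merged into one kernel-verified Lean document; each statement's English description precedes it below -/
import Mathlib

section
/- Let n ≥ 2, 2 ≤ p ≤ ∞, let γ : I → ℝⁿ be a smooth, injective, regular curve on a compact interval I, and let χ ∈ C_c^∞(ℝ) be nonnegative, not identically zero, and supported in the interior of I. Then there exists c > 0 (depending on p, γ, χ) such that for every λ ≥ 1 there exists a nonzero Schwartz function f on ℝⁿ belonging to Z_λ with ‖A_γ f‖_{L^p(ℝⁿ)} ≥ c λ^{−1/p} ‖f‖_{L^p(ℝⁿ)}. -/
open MeasureTheory Set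
open scoped FourierTransform RealInnerProductSpace ENNReal

noncomputable section

/-- Euclidean space ℝⁿ. -/
abbrev Euc (n : ℕ) := EuclideanSpace ℝ (Fin n)

/-- The averaging operator `A_γ f (x) = ∫ f(x - γ(s)) χ(s) ds`. -/
def avgOp {n : ℕ} (γ : ℝ → Euc n) (χ : ℝ → ℝ) (f : Euc n → ℂ) : Euc n → ℂ :=
  fun x => ∫ s : ℝ, f (x - γ s) * (χ s : ℂ)

/-- The `L^p` Sobolev norm `‖𝓕⁻¹[(1+|ξ|²)^{α/2} 𝓕 g]‖_{L^p}` of order `α`. -/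
def sobolevNorm {n : ℕ} (p : ℝ≥0∞) (α : ℝ) (g : Euc n → ℂ) : ℝ≥0∞ :=
  eLpNorm (𝓕⁻ (fun ξ : Euc n => (((1 + ‖ξ‖ ^ 2) ^ (α / 2) : ℝ) : ℂ) * 𝓕 g ξ)) p volume

/-- Non-degeneracy: `|det(γ'(s), …, γ⁽ⁿ⁾(s))| ≥ c₀ > 0` on `I`. -/
def NonDeg {n : ℕ} (γ : ℝ → Euc n) (I : Set ℝ) : Prop :=
  ∃ c₀ > (0 : ℝ), ∀ s ∈ I,
    c₀ ≤ |(Matrix.of fun i j : Fin n => iteratedDeriv ((j : ℕ) + 1) γ s i).det|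

/-!
At scale `λ` take `f = A_{-γ,φ} h`, where `h = λ ψ(λ ·)` with `𝓕 ψ` supported near a unit vector `ω`
orthogonal to a tangent `γ' s₀` with `χ s₀ > 0`, and `φ` is a cutoff near `s₀`. Then `f` is a
superposition of wave packets along `-γ`, and `A_γ` focuses all of them at the origin: after
rescaling, `A_γ f (y / λ)` tends to `L = ∫ χ φ (∫ ψ (r γ') dr)` as `λ → ∞` and `y → 0`, so
`‖A_γ f‖_p ≳ λ ^ (-n / p)`. Here `L ≠ 0` because `ψ` may be chosen with nonnegative real part on the
hyperplane `ω^⊥`, which contains `γ' s₀`. On the other hand an injective regular curve is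
bi-Lipschitz, so `‖f‖_∞ ≲ 1`, while `‖f‖_1 ≲ λ ^ (1 - n)`; hence `‖f‖_p ≲ λ ^ ((1 - n) / p)`.

For `λ` in a bounded range, `A_γ` is a Fourier multiplier whose symbol is real analytic along lines
through the origin and nonzero at the origin, so that it is nonzero somewhere in every annulus;
compactness makes the constant uniform.
-/

open Filter Topology

/-! ### Convolution with a finite measure -/

/-- The convolution `f * μ` of a function with a measure. -/
def measureConv {E : Type*} [Sub E] [MeasurableSpace E] (μ : Measure E) (f : E → ℂ) (x : E) : ℂ :=
  ∫ y, f (x - y) ∂μ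

lemma lintegral_enorm_measureConv_le {E : Type*} [NormedAddCommGroup E] [MeasurableSpace E]
    [BorelSpace E] [SecondCountableTopology E] (ν μ : Measure E) [SFinite ν]
    [ν.IsAddRightInvariant] [SFinite μ] {f : E → ℂ} (hf : Continuous f) :
    ∫⁻ x, ‖measureConv μ f x‖ₑ ∂ν ≤ μ univ * ∫⁻ x, ‖f x‖ₑ ∂ν :=
  calc ∫⁻ x, ‖measureConv μ f x‖ₑ ∂ν ≤ ∫⁻ x, ∫⁻ y, ‖f (x - y)‖ₑ ∂μ ∂ν :=
        lintegral_mono fun x => enorm_integral_le_lintegral_enorm _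
    _ = ∫⁻ y, ∫⁻ x, ‖f (x - y)‖ₑ ∂ν ∂μ :=
        lintegral_lintegral_swap (Continuous.aemeasurable (by fun_prop))
    _ = μ univ * ∫⁻ x, ‖f x‖ₑ ∂ν := by
        simp_rw [lintegral_sub_right_eq_self (fun x => ‖f x‖ₑ), lintegral_const, mul_comm]

section FourierSymbol

variable {E : Type*} [NormedAddCommGroup E] [InnerProductSpace ℝ E] [MeasurableSpace E]
  {μ : Measure E}

/-- The Fourier transform of the measure `μ` in the normalisation of `𝓕`: it is the symbol of the
Fourier multiplier `f ↦ f * μ`. -/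
def fourierSymbol (μ : Measure E) (ξ : E) : ℂ := charFun μ (-(2 * Real.pi) • ξ)

lemma fourierSymbol_eq_integral (μ : Measure E) (ξ : E) :
    fourierSymbol μ ξ = ∫ y, Complex.exp (↑(2 * Real.pi * ⟪ξ, -y⟫) * Complex.I) ∂μ := by
  rw [fourierSymbol, charFun_apply]
  congr with y
  rw [inner_smul_right, inner_neg_right, real_inner_comm, neg_mul, mul_neg]

variable [BorelSpace E] [IsFiniteMeasure μ]

lemma norm_iteratedFDeriv_charFun_le [SecondCountableTopology E] {k : ℕ} (hμ : MemLp id k μ)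
    (t : E) : ‖iteratedFDeriv ℝ k (charFun μ) t‖ ≤ ∫ y, ‖y‖ ^ k ∂μ := by
  refine ContinuousMultilinearMap.opNorm_le_bound (by positivity) fun v => ?_
  rw [iteratedFDeriv_charFun hμ, norm_mul, norm_pow, Complex.norm_I, one_pow, one_mul,
    ← integral_mul_const]
  refine norm_integral_le_of_norm_le (hμ.integrable_norm_pow'.mul_const _) (.of_forall fun y => ?_)
  calc ‖((∏ i, ⟪y, v i⟫ : ℝ) : ℂ) * Complex.exp (⟪y, t⟫ * Complex.I)‖
      = ∏ i, ‖⟪y, v i⟫‖ := by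
        simp [Complex.norm_exp_ofReal_mul_I]
    _ ≤ ∏ i, ‖y‖ * ‖v i‖ := by
        gcongr with i
        exact norm_inner_le_norm y (v i)
    _ = ‖y‖ ^ k * ∏ i, ‖v i‖ := by simp [Finset.prod_mul_distrib]

lemma hasTemperateGrowth_charFun [SecondCountableTopology E] (hμ : ∀ k : ℕ, MemLp id k μ) :
    (charFun μ).HasTemperateGrowth :=
  ⟨contDiff_charFun' hμ, fun k => ⟨0, ∫ y, ‖y‖ ^ k ∂μ, fun t => by
    simpa using norm_iteratedFDeriv_charFun_le (hμ k) t⟩⟩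

lemma hasTemperateGrowth_fourierSymbol [SecondCountableTopology E] (hμ : ∀ k : ℕ, MemLp id k μ) :
    (fourierSymbol μ).HasTemperateGrowth :=
  (hasTemperateGrowth_charFun hμ).comp
    (-(2 * Real.pi) • ContinuousLinearMap.id ℝ E).hasTemperateGrowth

variable [FiniteDimensional ℝ E]

lemma fourier_fourierMultiplierCLM_apply {g : E → ℂ} (hg : g.HasTemperateGrowth)
    (f : SchwartzMap E ℂ) (ξ : E) :
    𝓕 ⇑(SchwartzMap.fourierMultiplierCLM ℂ g f) ξ = g ξ * 𝓕 ⇑f ξ := by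
  rw [← SchwartzMap.fourier_coe, SchwartzMap.fourierMultiplierCLM_apply,
    FourierTransform.fourier_fourierInv_eq, SchwartzMap.smulLeftCLM_apply_apply hg, smul_eq_mul,
    SchwartzMap.fourier_coe]

lemma schwartzMap_apply_eq_integral_fourier (f : SchwartzMap E ℂ) (x : E) :
    f x = ∫ ξ, Complex.exp (↑(2 * Real.pi * ⟪ξ, x⟫) * Complex.I) * 𝓕 (⇑f) ξ := by
  have hf : f = 𝓕⁻ (𝓕 f) := (FourierTransform.fourierInv_fourier_eq f).symm
  conv_lhs => rw [hf, SchwartzMap.fourierInv_coe, SchwartzMap.fourier_coe, Real.fourierInv_eq']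
  rfl

lemma fourierMultiplierCLM_fourierSymbol (hμ : ∀ k : ℕ, MemLp id k μ) (f : SchwartzMap E ℂ) :
    ⇑(SchwartzMap.fourierMultiplierCLM ℂ (fourierSymbol μ) f) = measureConv μ f := by
  ext x
  let e (ξ y : E) : ℂ := Complex.exp (↑(2 * Real.pi * ⟪ξ, y⟫) * Complex.I)
  have he (ξ y : E) : e ξ x * e ξ (-y) = e ξ (x - y) := by
    rw [← Complex.exp_add, ← add_mul, ← Complex.ofReal_add, ← mul_add, ← inner_add_right,
      sub_eq_add_neg]
  have hint : Integrable (fun z : E × E => e z.1 (x - z.2) * 𝓕 (⇑f) z.1) (volume.prod μ) := by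
    rw [← SchwartzMap.fourier_coe]
    refine ((𝓕 f).integrable.comp_fst μ).mono ?_ (.of_forall fun z => ?_)
    · have := (𝓕 f).continuous
      exact Continuous.aestronglyMeasurable (by fun_prop)
    · rw [norm_mul, Complex.norm_exp_ofReal_mul_I, one_mul]
  calc SchwartzMap.fourierMultiplierCLM ℂ (fourierSymbol μ) f x
      = ∫ ξ, e ξ x * (fourierSymbol μ ξ * 𝓕 (⇑f) ξ) := by
        simp_rw [schwartzMap_apply_eq_integral_fourier _ x,
          fourier_fourierMultiplierCLM_apply (hasTemperateGrowth_fourierSymbol hμ), e]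
    _ = ∫ ξ, (∫ y, e ξ (x - y) * 𝓕 (⇑f) ξ ∂μ) := by
        simp_rw [← he, integral_mul_const, integral_const_mul, fourierSymbol_eq_integral, e,
          mul_assoc]
    _ = ∫ y, (∫ ξ, e ξ (x - y) * 𝓕 (⇑f) ξ) ∂μ := integral_integral_swap hint
    _ = measureConv μ f x := by
        simp_rw [measureConv, schwartzMap_apply_eq_integral_fourier f, e]

end FourierSymbol

section Nonvanishing

variable {E : Type*} [NormedAddCommGroup E] [InnerProductSpace ℝ E] [MeasurableSpace E]
  {μ : Measure E} {θ : E}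

lemma analyticOnNhd_charFun_smul (hθ : ∀ t : ℝ, Integrable (fun y => Real.exp (t * ⟪y, θ⟫)) μ) :
    AnalyticOnNhd ℝ (fun t : ℝ => charFun μ (t • θ)) univ := by
  let X (y : E) : ℝ := ⟪y, θ⟫
  have hX : ProbabilityTheory.integrableExpSet X μ = univ := eq_univ_of_forall hθ
  have hmgf : AnalyticOnNhd ℂ (ProbabilityTheory.complexMGF X μ) univ := by
    simpa [hX] using ProbabilityTheory.analyticOnNhd_complexMGF (X := X) (μ := μ)
  have hcharFun : (fun t : ℝ => charFun μ (t • θ)) =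
      fun t : ℝ => ProbabilityTheory.complexMGF X μ (t * Complex.I) := by
    ext t
    rw [charFun_apply, ProbabilityTheory.complexMGF]
    congr with y
    rw [inner_smul_right, Complex.ofReal_mul, mul_right_comm]
  rw [hcharFun]
  refine hmgf.restrictScalars.comp (fun t _ => ?_) (mapsTo_univ _ _)
  exact (Complex.ofRealCLM.analyticAt t).mul analyticAt_const

lemma exists_charFun_smul_ne_zero [IsFiniteMeasure μ] (hμ : μ ≠ 0)
    (hθ : ∀ t : ℝ, Integrable (fun y => Real.exp (t * ⟪y, θ⟫)) μ) {U : Set ℝ} (hU : IsOpen U)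
    (hU' : U.Nonempty) : ∃ t ∈ U, charFun μ (t • θ) ≠ 0 := by
  by_contra! hzero
  obtain ⟨t, ht⟩ := hU'
  have hvanish := (analyticOnNhd_charFun_smul hθ).eqOn_zero_of_preconnected_of_eventuallyEq_zero
    isPreconnected_univ (mem_univ t) (eventually_of_mem (hU.mem_nhds ht) hzero) (mem_univ 0)
  have hmass : μ.real univ = 0 := by simpa using hvanish
  exact hμ (Measure.measure_univ_eq_zero.1 ((measureReal_eq_zero_iff).1 hmass))

end Nonvanishing

lemma exists_fourierSymbol_ne_zero {E : Type*} [NormedAddCommGroup E] [InnerProductSpace ℝ E]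
    [Nontrivial E] [MeasurableSpace E] {μ : Measure E} [IsFiniteMeasure μ] (hμ : μ ≠ 0)
    (hexp : ∀ θ : E, Integrable (fun y => Real.exp ⟪y, θ⟫) μ) {r R : ℝ} (hr : 0 ≤ r) (hrR : r < R) :
    ∃ ξ : E, r < ‖ξ‖ ∧ ‖ξ‖ < R ∧ fourierSymbol μ ξ ≠ 0 := by
  obtain ⟨ω, hω⟩ := exists_norm_eq E zero_le_one
  obtain ⟨t, ⟨hrt, htR⟩, hne⟩ := exists_charFun_smul_ne_zero (θ := -(2 * Real.pi) • ω) hμ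
    (fun t => by simpa only [inner_smul_right] using hexp (t • -(2 * Real.pi) • ω))
    isOpen_Ioo (nonempty_Ioo.2 hrR)
  have ht : ‖t • ω‖ = t := by
    rw [norm_smul, hω, mul_one, Real.norm_of_nonneg (hr.trans hrt.le)]
  exact ⟨t • ω, by rwa [ht], by rwa [ht], by rwa [fourierSymbol, smul_comm]⟩

/-! ### Weighted measures on curves -/

/-- The push-forward along `γ` of the measure with density `η` on the line, so that `avgOp γ η` is
convolution with it. Negative values of `η` are truncated to `0`. -/
def curveMeasure {E : Type*} [MeasurableSpace E] (γ : ℝ → E) (η : ℝ → ℝ) : Measure E :=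
  (volume.withDensity fun s => ENNReal.ofReal (η s)).map γ

instance {E : Type*} [MeasurableSpace E] (γ : ℝ → E) (η : ℝ → ℝ) : SFinite (curveMeasure γ η) :=
  inferInstanceAs (SFinite (Measure.map _ _))

lemma isFiniteMeasure_curveMeasure {E : Type*} [MeasurableSpace E] {γ : ℝ → E} {η : ℝ → ℝ}
    (hη : Integrable η) : IsFiniteMeasure (curveMeasure γ η) :=
  have := isFiniteMeasure_withDensity_ofReal hη.hasFiniteIntegral
  Measure.isFiniteMeasure_map _ _

section CurveMeasure

variable {E : Type*} [NormedAddCommGroup E] [MeasurableSpace E] [BorelSpace E]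
  {γ : ℝ → E} {η : ℝ → ℝ}

lemma curveMeasure_ne_zero (hγ : Continuous γ) (hη : Continuous η) (hη_nonneg : 0 ≤ η)
    (hη_ne : η ≠ 0) : curveMeasure γ η ≠ 0 := by
  obtain ⟨s, hs⟩ := Function.ne_iff.1 hη_ne
  rw [curveMeasure, Ne, Measure.map_eq_zero_iff hγ.aemeasurable,
    withDensity_eq_zero_iff (by fun_prop)]
  intro hzero
  have := (Continuous.ae_eq_iff_eq volume (ENNReal.continuous_ofReal.comp hη)
    continuous_const).1 hzero
  exact hs (le_antisymm (ENNReal.ofReal_eq_zero.1 (congrFun this s)) (hη_nonneg s))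

lemma integral_curveMeasure (hγ : Continuous γ) (hη : Continuous η) (hη_nonneg : 0 ≤ η)
    {g : E → ℂ} (hg : Continuous g) :
    ∫ y, g y ∂curveMeasure γ η = ∫ s, g (γ s) * (η s : ℂ) := by
  rw [curveMeasure, integral_map hγ.aemeasurable hg.aestronglyMeasurable,
    integral_withDensity_eq_integral_toReal_smul (by fun_prop) (by simp)]
  congr with s
  rw [ENNReal.toReal_ofReal (hη_nonneg s), Complex.real_smul, mul_comm]

lemma integrable_curveMeasure [SecondCountableTopology E] {F : Type*} [NormedAddCommGroup F]
    [NormedSpace ℝ F] (hγ : Continuous γ) (hη : Continuous η) (hη_supp : HasCompactSupport η)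
    {g : E → F} (hg : Continuous g) : Integrable g (curveMeasure γ η) := by
  have hη' : Continuous fun s => (ENNReal.ofReal (η s)).toReal := by
    simpa only [ENNReal.toReal_ofReal'] using hη.max continuous_const
  rw [curveMeasure, integrable_map_measure hg.aestronglyMeasurable hγ.aemeasurable,
    integrable_withDensity_iff_integrable_smul' (by fun_prop) (by simp)]
  exact (hη'.smul (hg.comp hγ)).integrable_of_hasCompactSupport
    (hη_supp.comp_left (g := fun x => (ENNReal.ofReal x).toReal) (by simp)).smul_right

lemma memLp_id_curveMeasure [SecondCountableTopology E] (hγ : Continuous γ) (hη : Continuous η)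
    (hη_supp : HasCompactSupport η) (k : ℕ) : MemLp id k (curveMeasure γ η) := by
  have := isFiniteMeasure_curveMeasure (γ := γ) (hη.integrable_of_hasCompactSupport hη_supp)
  rcases eq_or_ne k 0 with rfl | hk
  · simpa using aestronglyMeasurable_id
  · rw [← integrable_norm_rpow_iff aestronglyMeasurable_id (by exact_mod_cast hk) (by simp)]
    simpa using integrable_curveMeasure hγ hη hη_supp (g := fun y : E => ‖y‖ ^ k) (by fun_prop)

end CurveMeasure

section AvgOp

variable {n : ℕ} {γ : ℝ → Euc n} {η : ℝ → ℝ}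

lemma avgOp_zero (γ : ℝ → Euc n) (η : ℝ → ℝ) : avgOp γ η 0 = 0 := by
  ext x
  simp [avgOp]

lemma avgOp_eq_measureConv (hγ : Continuous γ) (hη : Continuous η) (hη_nonneg : 0 ≤ η)
    {f : Euc n → ℂ} (hf : Continuous f) : avgOp γ η f = measureConv (curveMeasure γ η) f := by
  ext x
  exact (integral_curveMeasure hγ hη hη_nonneg (g := fun y => f (x - y)) (by fun_prop)).symm

lemma exists_schwartzMap_eq_avgOp (hγ : Continuous γ) (hη : Continuous η)
    (hη_supp : HasCompactSupport η) (hη_nonneg : 0 ≤ η) (f : SchwartzMap (Euc n) ℂ) :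
    ∃ F : SchwartzMap (Euc n) ℂ, ⇑F = avgOp γ η f ∧
      ∀ ξ, 𝓕 ⇑F ξ = fourierSymbol (curveMeasure γ η) ξ * 𝓕 ⇑f ξ := by
  have := isFiniteMeasure_curveMeasure (γ := γ) (hη.integrable_of_hasCompactSupport hη_supp)
  have hmoments := memLp_id_curveMeasure hγ hη hη_supp
  rw [avgOp_eq_measureConv hγ hη hη_nonneg f.continuous,
    ← fourierMultiplierCLM_fourierSymbol hmoments]
  exact ⟨_, rfl, fourier_fourierMultiplierCLM_apply (hasTemperateGrowth_fourierSymbol hmoments) f⟩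

lemma lintegral_enorm_avgOp_le (hγ : Continuous γ) (hη : Continuous η)
    (hη_nonneg : 0 ≤ η) {f : Euc n → ℂ} (hf : Continuous f) :
    ∫⁻ x, ‖avgOp γ η f x‖ₑ ≤ curveMeasure γ η univ * ∫⁻ x, ‖f x‖ₑ := by
  rw [avgOp_eq_measureConv hγ hη hη_nonneg hf]
  exact lintegral_enorm_measureConv_le volume _ hf

end AvgOp

/-! ### Schwartz functions with prescribed frequencies -/

section TestFunctions

variable {E : Type*} [NormedAddCommGroup E] [InnerProductSpace ℝ E] [FiniteDimensional ℝ E]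

/-- A smooth bump function, regarded as a complex-valued Schwartz function. -/
def bumpSchwartzMap {c : E} (g : ContDiffBump c) : SchwartzMap E ℂ :=
  HasCompactSupport.toSchwartzMap (f := fun x => (g x : ℂ))
    (g.hasCompactSupport.comp_left Complex.ofReal_zero)
    (Complex.ofRealCLM.contDiff.comp g.contDiff)

lemma bumpSchwartzMap_apply {c : E} (g : ContDiffBump c) (x : E) :
    bumpSchwartzMap g x = (g x : ℂ) := rfl

lemma support_bumpSchwartzMap {c : E} (g : ContDiffBump c) :
    Function.support (bumpSchwartzMap g) = Metric.ball c g.rOut := by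
  rw [← g.support_eq]
  ext x
  simp [bumpSchwartzMap_apply]

variable [MeasurableSpace E] [BorelSpace E]

lemma fourier_coe_fourierInv (f : SchwartzMap E ℂ) :
    𝓕 ⇑(𝓕⁻ f : SchwartzMap E ℂ) = f := by
  rw [← SchwartzMap.fourier_coe, FourierTransform.fourier_fourierInv_eq]

lemma exists_tsupport_fourier_subset_closedBall (ξ : E) {r : ℝ} (hr : 0 < r) :
    ∃ f : SchwartzMap E ℂ, tsupport (𝓕 ⇑f) ⊆ Metric.closedBall ξ r ∧ 𝓕 ⇑f ξ = 1 := by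
  let g : ContDiffBump ξ := ⟨r / 2, r, half_pos hr, half_lt_self hr⟩
  refine ⟨𝓕⁻ (bumpSchwartzMap g), ?_, ?_⟩ <;> rw [fourier_coe_fourierInv]
  · rw [tsupport, support_bumpSchwartzMap]
    exact Metric.closure_ball_subset_closedBall
  · rw [bumpSchwartzMap_apply,
      g.one_of_mem_closedBall (Metric.mem_closedBall_self g.rIn_pos.le), Complex.ofReal_one]

lemma conj_fourier_apply_of_inner_eq_zero {g : E → ℂ} {ω y : E}
    (hg : ∀ v, starRingEnd ℂ (g v) = g (ω - v)) (hy : ⟪ω, y⟫ = 0) :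
    starRingEnd ℂ (𝓕 g y) = 𝓕 g y := by
  rw [Real.fourier_eq', ← integral_conj,
    ← integral_sub_left_eq_self (fun v => Complex.exp (↑(-2 * Real.pi * ⟪v, y⟫) * Complex.I) • g v)
      volume ω]
  congr with v
  rw [smul_eq_mul, map_mul, hg, ← Complex.exp_conj, map_mul, Complex.conj_ofReal, Complex.conj_I,
    inner_sub_left, hy, zero_sub, smul_eq_mul]
  congr 2
  push_cast
  ring

lemma fourierInv_convolution_apply (f g : SchwartzMap E ℂ) (y : E) :
    𝓕⁻ (SchwartzMap.convolution (ContinuousLinearMap.mul ℂ ℂ) f g) y = 𝓕 f (-y) * 𝓕 g (-y) := by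
  rw [SchwartzMap.fourierInv_coe, Real.fourierInv_eq_fourier_neg, ← SchwartzMap.fourier_coe,
    SchwartzMap.fourier_convolution]
  rfl

-- The square of the inverse Fourier transform of a bump symmetric about `ω / 2`.
lemma exists_tsupport_fourier_subset_closedBall_and_re_nonneg (ω : E) {r : ℝ} (hr : 0 < r) :
    ∃ ψ : SchwartzMap E ℂ, tsupport (𝓕 ⇑ψ) ⊆ Metric.closedBall ω r ∧ (ψ 0).re ≠ 0 ∧
      ∀ y, ⟪ω, y⟫ = 0 → 0 ≤ (ψ y).re := by
  let g : ContDiffBump ((1 / 2 : ℝ) • ω) := ⟨r / 4, r / 2, by positivity, by linarith⟩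
  let B := bumpSchwartzMap g
  have hB (v : E) : starRingEnd ℂ (B v) = B (ω - v) := by
    have hsymm := g.sub ((1 / 2 : ℝ) • ω - v)
    rw [sub_sub_cancel, ← add_sub_assoc, ← add_smul, add_halves, one_smul] at hsymm
    simp only [B, bumpSchwartzMap_apply, Complex.conj_ofReal, hsymm]
  have hreal {y : E} (hy : ⟪ω, y⟫ = 0) : 𝓕 B y = ((𝓕 B y).re : ℂ) :=
    (Complex.conj_eq_iff_re.1 (conj_fourier_apply_of_inner_eq_zero hB hy)).symm
  have hsq {y : E} (hy : ⟪ω, y⟫ = 0) :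
      (𝓕⁻ (SchwartzMap.convolution (ContinuousLinearMap.mul ℂ ℂ) B B) y).re =
        (𝓕 B (-y)).re ^ 2 := by
    rw [fourierInv_convolution_apply, hreal (by rwa [inner_neg_right, neg_eq_zero]),
      ← Complex.ofReal_mul, Complex.ofReal_re, Complex.ofReal_re, sq]
  refine ⟨𝓕⁻ (SchwartzMap.convolution (ContinuousLinearMap.mul ℂ ℂ) B B), ?_, ?_, fun y hy => ?_⟩
  · rw [fourier_coe_fourierInv]
    refine closure_minimal (fun ξ hξ => ?_) Metric.isClosed_closedBall
    rw [Function.mem_support, SchwartzMap.convolution_apply] at hξ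
    have := support_convolution_subset _ hξ
    rw [support_bumpSchwartzMap, ball_add_ball g.rOut_pos g.rOut_pos, ← add_smul, add_halves,
      one_smul, add_halves] at this
    exact Metric.ball_subset_closedBall this
  · have hmass : 𝓕 B 0 = ((∫ x, g x : ℝ) : ℂ) := by
      rw [SchwartzMap.fourier_coe, Real.fourier_eq', ← integral_complex_ofReal]
      simp [B, bumpSchwartzMap_apply]
    rw [hsq (inner_zero_right ω), neg_zero, hmass, Complex.ofReal_re]
    exact pow_ne_zero 2 g.integral_pos.ne'
  · rw [hsq hy]
    exact sq_nonneg _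

end TestFunctions

section Dilation

variable {E : Type*} [NormedAddCommGroup E] [InnerProductSpace ℝ E]

/-- The dilation of `ψ` to frequency scale `lam`, normalised to preserve integrals along lines. -/
def dilation (lam : ℝ) (ψ : E → ℂ) (y : E) : ℂ := lam * ψ (lam • y)

lemma exists_schwartzMap_eq_dilation (ψ : SchwartzMap E ℂ) {lam : ℝ} (hlam : lam ≠ 0) :
    ∃ h : SchwartzMap E ℂ, ⇑h = dilation lam ψ :=
  ⟨(lam : ℂ) • SchwartzMap.compCLMOfContinuousLinearEquiv ℂ
    (ContinuousLinearEquiv.smulLeft (Units.mk0 lam hlam)) ψ, rfl⟩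

variable [FiniteDimensional ℝ E] [MeasurableSpace E] [BorelSpace E]

lemma fourier_dilation (ψ : E → ℂ) {lam : ℝ} (hlam : 0 < lam) (ξ : E) :
    𝓕 (dilation lam ψ) ξ = lam * ((lam ^ Module.finrank ℝ E)⁻¹ • 𝓕 ψ (lam⁻¹ • ξ)) := by
  have hdet : 0 ≤ (lam ^ Module.finrank ℝ E)⁻¹ := by positivity
  rw [Real.fourier_eq', Real.fourier_eq', ← abs_of_nonneg hdet,
    ← Measure.integral_comp_smul, ← integral_const_mul]
  congr with y
  rw [inner_smul_left, inner_smul_right, conj_trivial, mul_inv_cancel_left₀ hlam.ne', dilation,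
    smul_eq_mul, smul_eq_mul, mul_left_comm]

lemma support_fourier_dilation_subset {ψ : E → ℂ} {ω : E} (hω : ‖ω‖ = 1)
    (hψ : Function.support (𝓕 ψ) ⊆ Metric.closedBall ω (1 / 2)) {lam : ℝ} (hlam : 0 < lam) :
    Function.support (𝓕 (dilation lam ψ)) ⊆ {ξ | lam / 2 ≤ ‖ξ‖ ∧ ‖ξ‖ ≤ 2 * lam} := by
  intro ξ hξ
  have hne : 𝓕 ψ (lam⁻¹ • ξ) ≠ 0 := fun h =>
    hξ (by rw [fourier_dilation ψ hlam, h, smul_zero, mul_zero])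
  have hball := mem_closedBall_iff_norm.1 (hψ hne)
  have hnorm : ‖ξ‖ = lam * ‖lam⁻¹ • ξ‖ := by
    rw [norm_smul, Real.norm_of_nonneg (inv_nonneg.2 hlam.le), mul_inv_cancel_left₀ hlam.ne']
  have hupper := norm_sub_norm_le (lam⁻¹ • ξ) ω
  have hlower := norm_sub_norm_le ω (lam⁻¹ • ξ)
  rw [norm_sub_rev] at hlower
  simp only [mem_ofPred_eq, hnorm]
  constructor <;> nlinarith

lemma lintegral_enorm_dilation (ψ : E → ℂ) {lam : ℝ} (hlam : 0 < lam) :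
    ∫⁻ y, ‖dilation lam ψ y‖ₑ =
      ENNReal.ofReal (lam * (lam ^ Module.finrank ℝ E)⁻¹) * ∫⁻ y, ‖ψ y‖ₑ := by
  have hscale : ∫⁻ y, ‖ψ (lam • y)‖ₑ =
      ENNReal.ofReal (lam ^ Module.finrank ℝ E)⁻¹ * ∫⁻ y, ‖ψ y‖ₑ := by
    have hdet : 0 ≤ (lam ^ Module.finrank ℝ E)⁻¹ := by positivity
    rw [← abs_of_nonneg hdet, ← smul_eq_mul, ← lintegral_smul_measure,
      ← Measure.map_addHaar_smul volume hlam.ne']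
    exact (lintegral_map_equiv (fun y => ‖ψ y‖ₑ)
      (Homeomorph.smulOfNeZero lam hlam.ne').toMeasurableEquiv).symm
  simp_rw [dilation, enorm_mul]
  rw [lintegral_const_mul' _ _ enorm_ne_top, hscale, ENNReal.ofReal_mul hlam.le, mul_assoc,
    ← ofReal_norm, Complex.norm_of_nonneg hlam.le]

end Dilation

/-! ### Integrals over lines through the origin -/

lemma exists_norm_le_mul_inv_one_add_sq {E F : Type*} [NormedAddCommGroup E] [NormedSpace ℝ E]
    [NormedAddCommGroup F] [NormedSpace ℝ F] (ψ : SchwartzMap E F) :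
    ∃ C : ℝ, 0 ≤ C ∧ ∀ (y : E) (k : ℝ), |k| ≤ 1 + ‖y‖ → ‖ψ y‖ ≤ C * (1 + k ^ 2)⁻¹ := by
  have hdecay (y : E) := SchwartzMap.one_add_le_sup_seminorm_apply (𝕜 := ℝ) (m := (2, 0))
    le_rfl le_rfl ψ y
  simp only [norm_iteratedFDeriv_zero] at hdecay
  have hnonneg : 0 ≤ (1 + ‖(0 : E)‖) ^ 2 * ‖ψ 0‖ := by positivity
  refine ⟨2 * _, mul_nonneg zero_le_two (hnonneg.trans (hdecay 0)), fun y k hk => ?_⟩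
  have hk_sq : 1 + k ^ 2 ≤ 2 * (1 + ‖y‖) ^ 2 := by
    have := sq_le_sq' (abs_le.1 hk).1 (abs_le.1 hk).2
    nlinarith [norm_nonneg y]
  rw [← div_eq_mul_inv, le_div_iff₀ (by positivity)]
  calc ‖ψ y‖ * (1 + k ^ 2) ≤ ‖ψ y‖ * (2 * (1 + ‖y‖) ^ 2) := by gcongr
    _ = 2 * ((1 + ‖y‖) ^ 2 * ‖ψ y‖) := by ring
    _ ≤ _ := mul_le_mul_of_nonneg_left (hdecay y) zero_le_two

lemma integrable_const_mul_inv_one_add_mul_sq (C : ℝ) {c : ℝ} (hc : c ≠ 0) :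
    Integrable fun r : ℝ => C * (1 + (c * r) ^ 2)⁻¹ :=
  (integrable_inv_one_add_sq.comp_mul_left' hc).const_mul C

section LineIntegral

variable {E : Type*} [NormedAddCommGroup E]

/-- The integral of `ψ` over the line `ℝ v`, parametrised by `r ↦ r v`. -/
def lineIntegral [NormedSpace ℝ E] (ψ : E → ℂ) (v : E) : ℂ := ∫ r : ℝ, ψ (r • v)

lemma continuousOn_lineIntegral [NormedSpace ℝ E] (ψ : SchwartzMap E ℂ) :
    ContinuousOn (lineIntegral ψ) {0}ᶜ := by
  intro v hv
  obtain ⟨C, -, hC⟩ := exists_norm_le_mul_inv_one_add_sq ψ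
  have hv' : 0 < ‖v‖ / 2 := half_pos (norm_pos_iff.2 hv)
  have hψ := ψ.continuous
  refine ContinuousAt.continuousWithinAt <| continuousAt_of_dominated
    (bound := fun r => C * (1 + (‖v‖ / 2 * r) ^ 2)⁻¹)
    (.of_forall fun w => Continuous.aestronglyMeasurable (by fun_prop)) ?_
    (integrable_const_mul_inv_one_add_mul_sq C hv'.ne')
    (.of_forall fun r => Continuous.continuousAt (by fun_prop))
  filter_upwards [continuous_norm.continuousAt.eventually
    (lt_mem_nhds (half_lt_self (norm_pos_iff.2 hv)))] with w hw
  refine .of_forall fun r => hC _ _ ?_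
  rw [abs_mul, abs_of_pos hv', norm_smul, Real.norm_eq_abs]
  nlinarith [abs_nonneg r]

lemma re_lineIntegral_pos [InnerProductSpace ℝ E] {ψ : SchwartzMap E ℂ} {ω v : E} (hv : v ≠ 0)
    (hωv : ⟪ω, v⟫ = 0) (hψ_zero : (ψ 0).re ≠ 0) (hψ_nonneg : ∀ y, ⟪ω, y⟫ = 0 → 0 ≤ (ψ y).re) :
    0 < (lineIntegral ψ v).re := by
  obtain ⟨C, -, hC⟩ := exists_norm_le_mul_inv_one_add_sq ψ
  have hψ := ψ.continuous
  have hint : Integrable fun r : ℝ => ψ (r • v) := by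
    refine (integrable_const_mul_inv_one_add_mul_sq C (norm_ne_zero_iff.2 hv)).mono'
      (Continuous.aestronglyMeasurable (by fun_prop)) (.of_forall fun r => hC _ _ ?_)
    rw [abs_mul, abs_norm, norm_smul, Real.norm_eq_abs, mul_comm]
    exact le_add_of_nonneg_left zero_le_one
  rw [lineIntegral, ← Complex.reCLM_apply, ← Complex.reCLM.integral_comp_comm hint]
  refine integral_pos_of_integrable_nonneg_nonzero (x := 0) (by fun_prop)
    (Complex.reCLM.integrable_comp hint) (fun r => hψ_nonneg _ ?_) (by simpa using hψ_zero)
  rw [inner_smul_right, hωv, mul_zero]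

end LineIntegral

lemma exists_norm_eq_one_and_inner_eq_zero {E : Type*} [NormedAddCommGroup E]
    [InnerProductSpace ℝ E] (hE : 1 < Module.finrank ℝ E) (v : E) :
    ∃ ω : E, ‖ω‖ = 1 ∧ ⟪ω, v⟫ = 0 := by
  have hbot : (Submodule.span ℝ {v})ᗮ ≠ ⊥ := by
    intro h
    rw [Submodule.orthogonal_eq_bot_iff] at h
    have hspan := finrank_span_le_card (R := ℝ) ({v} : Set E)
    rw [h, finrank_top, toFinset_singleton, Finset.card_singleton] at hspan
    exact hspan.not_gt hE
  obtain ⟨u, hu, hu0⟩ := Submodule.exists_mem_ne_zero_of_ne_bot hbot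
  refine ⟨‖u‖⁻¹ • u, norm_smul_inv_norm hu0, ?_⟩
  rw [inner_smul_left, Submodule.mem_orthogonal_singleton_iff_inner_left.1 hu, mul_zero]

lemma exists_contDiffBump_integral_smul_ne_zero {E : Type*} [NormedAddCommGroup E]
    [NormedSpace ℝ E] [FiniteDimensional ℝ E] [MeasurableSpace E] [BorelSpace E] (μ : Measure E)
    [IsLocallyFiniteMeasure μ] [μ.IsOpenPosMeasure] {G : E → ℂ} {U : Set E} (hU : IsOpen U)
    (hG : ContinuousOn G U) {x : E} (hx : x ∈ U) (hpos : 0 < (G x).re) :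
    ∃ φ : ContDiffBump x, tsupport φ ⊆ U ∧ ∫ y, φ y • G y ∂μ ≠ 0 := by
  have hev : ∀ᶠ y in 𝓝 x, y ∈ U ∧ 0 < (G y).re :=
    (hU.eventually_mem hx).and
      ((Complex.continuous_re.continuousAt.comp (hG.continuousAt (hU.mem_nhds hx))).eventually
        (lt_mem_nhds hpos))
  obtain ⟨δ, hδ, hball⟩ := Metric.nhds_basis_closedBall.eventually_iff.1 hev
  let φ : ContDiffBump x := ⟨δ / 2, δ, half_pos hδ, half_lt_self hδ⟩
  have hφU : tsupport φ ⊆ U := φ.tsupport_eq.trans_subset fun y hy => (hball hy).1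
  have hcont : Continuous fun y => φ y • G y := by
    refine continuous_of_tsupport fun y hy => ?_
    have hyU : y ∈ U := hφU (tsupport_smul_subset_left _ _ hy)
    exact φ.continuous.continuousAt.smul (hG.continuousAt (hU.mem_nhds hyU))
  have hint : Integrable (fun y => φ y • G y) μ :=
    hcont.integrable_of_hasCompactSupport φ.hasCompactSupport.smul_right
  refine ⟨φ, hφU, fun hzero => ?_⟩
  have hre : 0 < ∫ y, Complex.reCLM (φ y • G y) ∂μ := by
    refine integral_pos_of_integrable_nonneg_nonzero (x := x) (by fun_prop)
      (Complex.reCLM.integrable_comp hint) (fun y => ?_) ?_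
    · by_cases hy : y ∈ Metric.closedBall x δ
      · simpa using mul_nonneg φ.nonneg (hball hy).2.le
      · simp [φ.zero_of_le_dist (not_le.1 hy).le]
    · simpa [φ.one_of_mem_closedBall (Metric.mem_closedBall_self φ.rIn_pos.le)] using hpos.ne'
  rw [Complex.reCLM.integral_comp_comm hint, hzero, map_zero] at hre
  exact hre.false

/-! ### Injective regular curves are bi-Lipschitz -/

section LowerLipschitz

variable {E : Type*} [NormedAddCommGroup E] [NormedSpace ℝ E] {γ : ℝ → E}

lemma continuous_integral_deriv_segment (hγ : Continuous (deriv γ)) :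
    Continuous fun z : ℝ × ℝ => ∫ u in (0 : ℝ)..1, deriv γ (z.1 + u * (z.2 - z.1)) :=
  intervalIntegral.continuous_parametric_intervalIntegral_of_continuous'
    (by simp only [Function.uncurry_def]; fun_prop) 0 1

lemma smul_integral_deriv_segment [CompleteSpace E] (hγ : ContDiff ℝ 1 γ) (s t : ℝ) :
    (t - s) • ∫ u in (0 : ℝ)..1, deriv γ (s + u * (t - s)) = γ t - γ s := by
  have := hγ.continuous_deriv le_rfl
  have hsegment (u : ℝ) : HasDerivAt (fun u => s + u * (t - s)) (t - s) u := by
    simpa using ((hasDerivAt_id u).mul_const (t - s)).const_add s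
  rw [← intervalIntegral.integral_smul, intervalIntegral.integral_eq_sub_of_hasDerivAt
    (f := fun u => γ (s + u * (t - s)))
    (fun u _ => ((hγ.differentiable one_ne_zero) _).hasDerivAt.scomp u (hsegment u))
    (Continuous.intervalIntegrable (by fun_prop) _ _)]
  simp

lemma exists_mul_abs_sub_le_norm_sub [CompleteSpace E] (hγ : ContDiff ℝ 1 γ) {K : Set ℝ}
    (hK : IsCompact K) (hinj : InjOn γ K) (hreg : ∀ s ∈ K, deriv γ s ≠ 0) :
    ∃ c : ℝ, 0 < c ∧ ∀ s ∈ K, ∀ t ∈ K, c * |t - s| ≤ ‖γ t - γ s‖ := by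
  rcases K.eq_empty_or_nonempty with rfl | ⟨s₀, hs₀⟩
  · exact ⟨1, one_pos, by simp⟩
  let Q (z : ℝ × ℝ) : E := ∫ u in (0 : ℝ)..1, deriv γ (z.1 + u * (z.2 - z.1))
  have hQ (s t : ℝ) : (t - s) • Q (s, t) = γ t - γ s := smul_integral_deriv_segment hγ s t
  obtain ⟨⟨s, t⟩, ⟨hs : s ∈ K, ht : t ∈ K⟩, hmin⟩ :=
    (hK.prod hK).exists_isMinOn ⟨(s₀, s₀), hs₀, hs₀⟩
      (continuous_integral_deriv_segment (hγ.continuous_deriv le_rfl)).norm.continuousOn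
  refine ⟨‖Q (s, t)‖, norm_pos_iff.2 fun hzero => ?_, fun s' hs' t' ht' => ?_⟩
  · have hγst : γ t = γ s := sub_eq_zero.1 (by rw [← hQ s t, hzero, smul_zero])
    obtain rfl := hinj ht hs hγst
    exact hreg t ht (by simpa [Q] using hzero)
  · rw [← hQ s' t', norm_smul, Real.norm_eq_abs, mul_comm]
    gcongr
    exact hmin (mk_mem_prod hs' ht')

end LowerLipschitz

/-! ### Elementary `L^p` bounds -/

lemma exists_pos_ofReal_mul_le {A B : ℝ≥0∞} (hA : A ≠ ⊤) (hB : B ≠ 0) :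
    ∃ c : ℝ, 0 < c ∧ ENNReal.ofReal c * A ≤ B := by
  obtain ⟨c, hc, hcB⟩ := ENNReal.lt_iff_exists_nnreal_btwn.1 (ENNReal.div_pos hB hA)
  refine ⟨c, by exact_mod_cast hc, ?_⟩
  rw [ENNReal.ofReal_coe_nnreal]
  exact ENNReal.mul_le_of_le_div hcB.le

lemma ofReal_rpow_neg_mul_ofReal_mul_rpow {a : ℝ} (ha : 0 < a) (b : ℝ) {θ : ℝ} (hθ : 0 ≤ θ) :
    ENNReal.ofReal (a ^ (-θ)) * ENNReal.ofReal (a * b) ^ θ = ENNReal.ofReal b ^ θ := by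
  rw [ENNReal.ofReal_mul ha.le, ENNReal.mul_rpow_of_nonneg _ _ hθ,
    ENNReal.ofReal_rpow_of_pos ha, ← mul_assoc, ← ENNReal.ofReal_mul (by positivity),
    Real.rpow_neg ha.le, inv_mul_cancel₀ (Real.rpow_pos_of_pos ha θ).ne', ENNReal.ofReal_one,
    one_mul]

section LpBounds

variable {α E : Type*} {m : MeasurableSpace α} {μ : Measure α} [NormedAddCommGroup E] {f : α → E}
  {p : ℝ≥0∞}

lemma eLpNorm_le_rpow_mul_lintegral_enorm_rpow (hp : 1 ≤ p) {M : ℝ} (hM : ∀ x, ‖f x‖ ≤ M) :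
    eLpNorm f p μ ≤
      ENNReal.ofReal M ^ (1 - 1 / p.toReal) * (∫⁻ x, ‖f x‖ₑ ∂μ) ^ (1 / p.toReal) := by
  rcases eq_or_ne p ⊤ with rfl | hp_top
  · simpa using eLpNormEssSup_le_of_ae_bound (.of_forall hM)
  have hp_pos : p ≠ 0 := (one_pos.trans_le hp).ne'
  have hp_real : 1 ≤ p.toReal := by simpa using ENNReal.toReal_mono hp_top hp
  set q := p.toReal
  have hpointwise (x : α) : ‖f x‖ₑ ^ q ≤ ENNReal.ofReal M ^ (q - 1) * ‖f x‖ₑ := by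
    calc ‖f x‖ₑ ^ q = ‖f x‖ₑ ^ (q - 1) * ‖f x‖ₑ ^ (1 : ℝ) := by
          rw [← ENNReal.rpow_add_of_nonneg _ _ (sub_nonneg.2 hp_real) zero_le_one, sub_add_cancel]
      _ ≤ ENNReal.ofReal M ^ (q - 1) * ‖f x‖ₑ := by
          rw [ENNReal.rpow_one, ← ofReal_norm]
          gcongr
          exact hM x
  calc eLpNorm f p μ = (∫⁻ x, ‖f x‖ₑ ^ q ∂μ) ^ (1 / q) :=
        eLpNorm_eq_lintegral_rpow_enorm_toReal hp_pos hp_top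
    _ ≤ (∫⁻ x, ENNReal.ofReal M ^ (q - 1) * ‖f x‖ₑ ∂μ) ^ (1 / q) := by gcongr; exact hpointwise _
    _ = ENNReal.ofReal M ^ (1 - 1 / q) * (∫⁻ x, ‖f x‖ₑ ∂μ) ^ (1 / q) := by
        rw [lintegral_const_mul' _ _ (ENNReal.rpow_ne_top_of_nonneg (sub_nonneg.2 hp_real)
          ENNReal.ofReal_ne_top), ENNReal.mul_rpow_of_nonneg _ _ (by positivity),
          ← ENNReal.rpow_mul]
        congr 2
        field_simp

lemma ofReal_mul_measure_rpow_le_eLpNorm (hp : p ≠ 0) {s : Set α} (hs : MeasurableSet s)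
    (hμs : μ s ≠ 0) {c : ℝ} (hc : 0 ≤ c) (hf : ∀ x ∈ s, c ≤ ‖f x‖) :
    ENNReal.ofReal c * μ s ^ (1 / p.toReal) ≤ eLpNorm f p μ := by
  rw [← Real.enorm_eq_ofReal hc, ← eLpNorm_indicator_const' hs hμs hp]
  refine eLpNorm_mono fun x => ?_
  by_cases hx : x ∈ s
  · simpa [hx, abs_of_nonneg hc] using hf x hx
  · simp [hx]

end LpBounds

lemma schwartzMap_eLpNorm_ne_zero {E : Type*} [NormedAddCommGroup E] [NormedSpace ℝ E]
    [MeasurableSpace E] [BorelSpace E] [SecondCountableTopology E] (μ : Measure E)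
    [μ.IsOpenPosMeasure] {p : ℝ≥0∞} (hp : p ≠ 0) {f : SchwartzMap E ℂ} (hf : f ≠ 0) :
    eLpNorm f p μ ≠ 0 := by
  rw [Ne, eLpNorm_eq_zero_iff f.continuous.aestronglyMeasurable hp,
    f.continuous.ae_eq_iff_eq μ continuous_zero]
  exact fun h => hf (DFunLike.coe_injective h)

/-! ### Rescaled averages -/

lemma norm_mul_ofReal_le {w : ℂ} {u B : ℝ} (hu : |u| ≤ 1) (hB : 0 ≤ B) (hw : u ≠ 0 → ‖w‖ ≤ B) :
    ‖w * u‖ ≤ B := by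
  rcases eq_or_ne u 0 with rfl | hu_ne
  · simpa using hB
  · rw [norm_mul, Complex.norm_real, Real.norm_eq_abs]
    exact (mul_le_of_le_one_right (norm_nonneg w) hu).trans (hw hu_ne)

section Rescaling

variable {n : ℕ} {γ : ℝ → Euc n} {η χ : ℝ → ℝ} {K : Set ℝ} {c : ℝ}

-- Comparing with the point of the curve nearest to `-x` bounds the integrand by a Cauchy density.
lemma exists_forall_norm_avgOp_dilation_le (hK : IsCompact K)
    (hγ : ContinuousOn γ K) (hc : 0 < c) (hlip : ∀ s ∈ K, ∀ t ∈ K, c * |t - s| ≤ ‖γ t - γ s‖)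
    (hη : ∀ s, |η s| ≤ 1) (hη_supp : Function.support η ⊆ K) (ψ : SchwartzMap (Euc n) ℂ) :
    ∃ M : ℝ, ∀ lam > 0, ∀ x, ‖avgOp (-γ) η (dilation lam ψ) x‖ ≤ M := by
  rcases K.eq_empty_or_nonempty with rfl | hK_ne
  · exact ⟨0, by simp [avgOp, Function.support_eq_empty_iff.1 (subset_empty_iff.1 hη_supp)]⟩
  obtain ⟨C, hC_nonneg, hC⟩ := exists_norm_le_mul_inv_one_add_sq ψ
  refine ⟨C * (2 / c * Real.pi), fun lam hlam x => ?_⟩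
  obtain ⟨t₀, ht₀, hmin⟩ :=
    hK.exists_isMinOn hK_ne (f := fun t => ‖x + γ t‖) (continuousOn_const.add hγ).norm
  have hk : 0 < lam * (c / 2) := by positivity
  have hcauchy : ∫ t, lam * (C * (1 + (lam * (c / 2) * (t - t₀)) ^ 2)⁻¹) =
      C * (2 / c * Real.pi) := by
    rw [integral_const_mul, integral_const_mul,
      integral_sub_right_eq_self (fun t => (1 + (lam * (c / 2) * t) ^ 2)⁻¹),
      Measure.integral_comp_mul_left (fun t => (1 + t ^ 2)⁻¹), integral_univ_inv_one_add_sq,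
      abs_of_pos (inv_pos.2 hk), smul_eq_mul]
    field_simp
  rw [← hcauchy]
  refine norm_integral_le_of_norm_le
    (((integrable_const_mul_inv_one_add_mul_sq C hk.ne').comp_sub_right t₀).const_mul lam)
    (.of_forall fun t => norm_mul_ofReal_le (hη t) (by positivity) fun ht => ?_)
  have hnear : c * |t - t₀| ≤ 2 * ‖x + γ t‖ := by
    have hle : ‖x + γ t₀‖ ≤ ‖x + γ t‖ := hmin (hη_supp ht)
    calc c * |t - t₀| ≤ ‖γ t - γ t₀‖ := hlip t₀ ht₀ t (hη_supp ht)
      _ = ‖(x + γ t) - (x + γ t₀)‖ := by rw [add_sub_add_left_eq_sub]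
      _ ≤ ‖x + γ t‖ + ‖x + γ t₀‖ := norm_sub_le _ _
      _ ≤ 2 * ‖x + γ t‖ := by linarith
  rw [dilation, norm_mul, Complex.norm_of_nonneg hlam.le, Pi.neg_apply, sub_neg_eq_add]
  gcongr
  refine hC _ _ ?_
  rw [abs_mul, abs_of_pos hk, norm_smul, Real.norm_of_nonneg hlam.le]
  nlinarith

lemma avgOp_dilation_rescale (γ : ℝ → Euc n) (η : ℝ → ℝ) (ψ : Euc n → ℂ) {lam : ℝ}
    (hlam : 0 < lam) (y : Euc n) (s : ℝ) :
    avgOp (-γ) η (dilation lam ψ) (lam⁻¹ • y - γ s) =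
      ∫ r : ℝ, ψ (y + lam • (γ (s + lam⁻¹ * r) - γ s)) * (η (s + lam⁻¹ * r) : ℂ) := by
  rw [Measure.integral_comp_mul_left
      (fun u => ψ (y + lam • (γ (s + u) - γ s)) * (η (s + u) : ℂ)), inv_inv, abs_of_pos hlam,
    integral_add_left_eq_self (fun t => ψ (y + lam • (γ t - γ s)) * (η t : ℂ)),
    ← integral_smul, avgOp]
  congr with t
  rw [dilation, Complex.real_smul, ← mul_assoc, Pi.neg_apply, sub_neg_eq_add, sub_add,
    ← sub_neg_eq_add y, smul_sub, smul_inv_smul₀ hlam.ne', ← smul_neg, neg_sub]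

lemma tendsto_avgOp_dilation (hγ : Differentiable ℝ γ) (hc : 0 < c)
    (hlip : ∀ s ∈ K, ∀ t ∈ K, c * |t - s| ≤ ‖γ t - γ s‖) (hη : Continuous η)
    (hη_le : ∀ s, |η s| ≤ 1) (hη_supp : Function.support η ⊆ K) (ψ : SchwartzMap (Euc n) ℂ)
    {s : ℝ} (hs : s ∈ K) :
    Tendsto (fun z : ℝ × Euc n =>
        avgOp (-γ) η (dilation z.1 ψ) (z.1⁻¹ • z.2 - γ s))
      (atTop ×ˢ 𝓝 0) (𝓝 (lineIntegral ψ (deriv γ s) * η s)) := by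
  obtain ⟨C, hC_nonneg, hC⟩ := exists_norm_le_mul_inv_one_add_sq ψ
  have hγ_cont := hγ.continuous
  have hψ := ψ.continuous
  have hlam : ∀ᶠ z : ℝ × Euc n in atTop ×ˢ 𝓝 0, 0 < z.1 :=
    tendsto_fst.eventually (eventually_gt_atTop 0)
  have hy : ∀ᶠ z : ℝ × Euc n in atTop ×ˢ 𝓝 0, ‖z.2‖ < 1 :=
    tendsto_snd.norm.eventually (gt_mem_nhds (by simp))
  rw [lineIntegral, ← integral_mul_const]
  refine Tendsto.congr' (hlam.mono fun z hz => (avgOp_dilation_rescale γ η ψ hz z.2 s).symm) ?_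
  refine tendsto_integral_filter_of_dominated_convergence (fun r => C * (1 + (c * r) ^ 2)⁻¹)
    (.of_forall fun z => Continuous.aestronglyMeasurable (by fun_prop)) ?_
    (integrable_const_mul_inv_one_add_mul_sq C hc.ne') (.of_forall fun r => ?_)
  · filter_upwards [hlam, hy] with z hz hz_norm
    refine .of_forall fun r =>
      norm_mul_ofReal_le (hη_le _) (by positivity) fun hr => hC _ _ ?_
    have hchord : c * |r| ≤ ‖z.1 • (γ (s + z.1⁻¹ * r) - γ s)‖ := by
      have hle := hlip s hs _ (hη_supp hr)
      rw [add_sub_cancel_left, abs_mul, abs_of_pos (inv_pos.2 hz)] at hle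
      rw [norm_smul, Real.norm_of_nonneg hz.le, ← inv_mul_le_iff₀ hz]
      linarith
    rw [abs_mul, abs_of_pos hc]
    linarith [norm_le_add_norm_add' z.2 (z.1 • (γ (s + z.1⁻¹ * r) - γ s))]
  · have hslope : Tendsto (fun z : ℝ × Euc n => z.1 • (γ (s + z.1⁻¹ * r) - γ s))
        (atTop ×ˢ 𝓝 0) (𝓝 (r • deriv γ s)) :=
      (hγ s).hasDerivAt.hasFDerivAt.lim r (tendsto_norm_atTop_atTop.comp tendsto_fst)
    have harg : Tendsto (fun z : ℝ × Euc n => s + z.1⁻¹ * r) (atTop ×ˢ 𝓝 0) (𝓝 s) := by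
      simpa using ((tendsto_inv_atTop_zero.comp tendsto_fst).mul_const r).const_add s
    refine ((hψ.tendsto _).comp ?_).mul
      ((Complex.continuous_ofReal.tendsto _).comp ((hη.tendsto s).comp harg))
    simpa using tendsto_snd.add hslope

lemma tendsto_avgOp_avgOp_dilation (hγ : Differentiable ℝ γ) (hK : IsCompact K) (hc : 0 < c)
    (hlip : ∀ s ∈ K, ∀ t ∈ K, c * |t - s| ≤ ‖γ t - γ s‖) (hη : Continuous η) (hη_nonneg : 0 ≤ η)
    (hη_le : ∀ s, |η s| ≤ 1) (hη_supp : Function.support η ⊆ K) (hχ : Integrable χ)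
    (hχ_supp : Function.support χ ⊆ K) (ψ : SchwartzMap (Euc n) ℂ) :
    Tendsto (fun z : ℝ × Euc n =>
        avgOp γ χ (avgOp (-γ) η (dilation z.1 ψ)) (z.1⁻¹ • z.2))
      (atTop ×ˢ 𝓝 0) (𝓝 (∫ s, η s • (lineIntegral ψ (deriv γ s) * χ s))) := by
  obtain ⟨M, hM⟩ :=
    exists_forall_norm_avgOp_dilation_le hK hγ.continuous.continuousOn hc hlip hη_le hη_supp ψ
  have hlam : ∀ᶠ z : ℝ × Euc n in atTop ×ˢ 𝓝 0, 0 < z.1 :=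
    tendsto_fst.eventually (eventually_gt_atTop 0)
  have hη_compact : HasCompactSupport η := .of_support_subset_isCompact hK hη_supp
  refine tendsto_integral_filter_of_dominated_convergence (fun s => M * |χ s|) ?_ ?_
    (hχ.abs.const_mul M) (.of_forall fun s => ?_)
  · filter_upwards [hlam] with z hz
    obtain ⟨h, hh⟩ := exists_schwartzMap_eq_dilation ψ hz.ne'
    obtain ⟨F, hF, -⟩ :=
      exists_schwartzMap_eq_avgOp hγ.continuous.neg hη hη_compact hη_nonneg h
    rw [hh] at hF
    have hγ_cont := hγ.continuous
    have hF_cont := F.continuous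
    rw [← hF]
    exact (Continuous.aestronglyMeasurable (by fun_prop)).mul hχ.ofReal.aestronglyMeasurable
  · filter_upwards [hlam] with z hz
    refine .of_forall fun s => ?_
    rw [norm_mul, Complex.norm_real, Real.norm_eq_abs]
    gcongr
    exact hM _ hz _
  · by_cases hs : χ s = 0
    · simp [hs]
    · have hlim := tendsto_avgOp_dilation hγ hc hlip hη hη_le hη_supp ψ (hχ_supp hs)
      rw [Complex.real_smul, ← mul_assoc, mul_comm (η s : ℂ)]
      exact hlim.mul_const _

lemma exists_testFunction_and_cutoff (hn : 2 ≤ n) (hγ : Continuous (deriv γ))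
    (hreg : ∀ s ∈ K, deriv γ s ≠ 0) (hχ : Continuous χ) (hχ_supp : Function.support χ ⊆ K)
    (hχ_nonneg : 0 ≤ χ) (hχ_ne : χ ≠ 0) :
    ∃ (ω : Euc n) (ψ : SchwartzMap (Euc n) ℂ) (s₀ : ℝ) (φ : ContDiffBump s₀), ‖ω‖ = 1 ∧
      Function.support (𝓕 ⇑ψ) ⊆ Metric.closedBall ω (1 / 2) ∧ Function.support φ ⊆ K ∧
      ∫ s, φ s • (lineIntegral ψ (deriv γ s) * χ s) ≠ 0 := by
  obtain ⟨s₀, hs₀⟩ := Function.ne_iff.1 hχ_ne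
  obtain ⟨ω, hω, hω_orth⟩ :=
    exists_norm_eq_one_and_inner_eq_zero (by rwa [finrank_euclideanSpace_fin]) (deriv γ s₀)
  obtain ⟨ψ, hψ_supp, hψ_zero, hψ_nonneg⟩ :=
    exists_tsupport_fourier_subset_closedBall_and_re_nonneg ω one_half_pos
  have hcont : ContinuousOn (fun s => lineIntegral ψ (deriv γ s) * χ s) (Function.support χ) :=
    ((continuousOn_lineIntegral ψ).comp hγ.continuousOn fun s hs => hreg s (hχ_supp hs)).mul
      (Complex.continuous_ofReal.comp hχ).continuousOn
  have hpos : 0 < (lineIntegral ψ (deriv γ s₀) * χ s₀).re := by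
    rw [Complex.re_mul_ofReal]
    exact mul_pos (re_lineIntegral_pos (hreg s₀ (hχ_supp hs₀)) hω_orth hψ_zero hψ_nonneg)
      ((hχ_nonneg s₀).lt_of_ne' hs₀)
  obtain ⟨φ, hφ_supp, hφ⟩ := exists_contDiffBump_integral_smul_ne_zero volume
    hχ.isOpen_support hcont hs₀ hpos
  exact ⟨ω, ψ, s₀, φ, hω, (subset_tsupport _).trans hψ_supp,
    (subset_tsupport _).trans (hφ_supp.trans hχ_supp), hφ⟩

end Rescaling

/-! ### Lower bounds for averaging operators -/

section LowerBound

variable {n : ℕ} {γ : ℝ → Euc n} {η χ : ℝ → ℝ} {K : Set ℝ} {c : ℝ} {p : ℝ≥0∞}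

/-- The operator `avgOp γ χ` has `L^p` norm at least `c * lam ^ (-1 / p)` at frequency scale `lam`:
some nonzero Schwartz function in the class `Z_lam` attains this bound. The exponent is written
`(1 / p).toReal`, so that it vanishes at `p = ∞`. -/
def HasLowerBoundAt (p : ℝ≥0∞) (γ : ℝ → Euc n) (χ : ℝ → ℝ) (c lam : ℝ) : Prop :=
  ∃ f : SchwartzMap (Euc n) ℂ, f ≠ 0 ∧
    tsupport (𝓕 ⇑f) ⊆ {ξ : Euc n | lam / 2 ≤ ‖ξ‖ ∧ ‖ξ‖ ≤ 2 * lam} ∧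
    ENNReal.ofReal (c * lam ^ (-(1 / p).toReal)) * eLpNorm (⇑f) p volume ≤
      eLpNorm (avgOp γ χ ⇑f) p volume

/-- The lower bound `HasLowerBoundAt` holds with one positive constant at all scales in `S`. -/
def HasLowerBoundOn (p : ℝ≥0∞) (γ : ℝ → Euc n) (χ : ℝ → ℝ) (S : Set ℝ) : Prop :=
  ∃ c : ℝ, 0 < c ∧ ∀ lam ∈ S, HasLowerBoundAt p γ χ c lam

lemma HasLowerBoundAt.mono {c' lam : ℝ} (h : HasLowerBoundAt p γ χ c' lam) (hc : c ≤ c')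
    (hlam : 0 ≤ lam) : HasLowerBoundAt p γ χ c lam := by
  obtain ⟨f, hf, hf_supp, hf_le⟩ := h
  exact ⟨f, hf, hf_supp, hf_le.trans' (by gcongr)⟩

lemma HasLowerBoundOn.mono {S T : Set ℝ} (h : HasLowerBoundOn p γ χ T) (hST : S ⊆ T) :
    HasLowerBoundOn p γ χ S :=
  let ⟨c, hc, hT⟩ := h
  ⟨c, hc, fun lam hlam => hT lam (hST hlam)⟩

lemma HasLowerBoundOn.union {S T : Set ℝ} (hS : HasLowerBoundOn p γ χ S)
    (hT : HasLowerBoundOn p γ χ T) (hnonneg : S ∪ T ⊆ Ici 0) : HasLowerBoundOn p γ χ (S ∪ T) := by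
  obtain ⟨c, hc, hS⟩ := hS
  obtain ⟨d, hd, hT⟩ := hT
  refine ⟨min c d, lt_min hc hd, fun lam hlam => ?_⟩
  exact hlam.elim (fun h => (hS lam h).mono (min_le_left c d) (hnonneg hlam))
    fun h => (hT lam h).mono (min_le_right c d) (hnonneg hlam)

-- One function works for all scales near `r`: its frequencies cluster at a point where the symbol
-- of the operator does not vanish.
lemma exists_mem_nhds_hasLowerBoundOn (hn : n ≠ 0) (hp : p ≠ 0) (hγ : Continuous γ)
    (hχ : Continuous χ) (hχ_supp : HasCompactSupport χ) (hχ_nonneg : 0 ≤ χ) (hχ_ne : χ ≠ 0)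
    {r : ℝ} (hr : 0 < r) : ∃ t ∈ 𝓝 r, HasLowerBoundOn p γ χ (t ∩ Ici 1) := by
  have : Nonempty (Fin n) := Fin.pos_iff_nonempty.1 (Nat.pos_of_ne_zero hn)
  have := isFiniteMeasure_curveMeasure (γ := γ) (hχ.integrable_of_hasCompactSupport hχ_supp)
  obtain ⟨ξ, hξ_lower, hξ_upper, hξ⟩ :=
    exists_fourierSymbol_ne_zero (curveMeasure_ne_zero hγ hχ hχ_nonneg hχ_ne)
      (fun θ => integrable_curveMeasure hγ hχ hχ_supp (by fun_prop)) (by positivity : 0 ≤ r / 2)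
      (by linarith : r / 2 < 2 * r)
  obtain ⟨δ, hδ, hδ_lt⟩ := exists_between (lt_min (sub_pos.2 hξ_lower) (sub_pos.2 hξ_upper))
  rw [lt_min_iff] at hδ_lt
  obtain ⟨f, hf_supp, hfξ⟩ := exists_tsupport_fourier_subset_closedBall ξ hδ
  obtain ⟨F, hF, hF_fourier⟩ := exists_schwartzMap_eq_avgOp hγ hχ hχ_supp hχ_nonneg f
  have hF_ne : F ≠ 0 := by
    rintro rfl
    specialize hF_fourier ξ
    rw [hfξ, mul_one, ← SchwartzMap.fourier_coe, FourierTransform.fourier_zero] at hF_fourier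
    exact hξ hF_fourier.symm
  have hf_ne : f ≠ 0 := by
    rintro rfl
    exact hF_ne (DFunLike.coe_injective (hF.trans (avgOp_zero γ χ)))
  obtain ⟨c, hc, hle⟩ := exists_pos_ofReal_mul_le (f.memLp p volume).eLpNorm_ne_top
    (schwartzMap_eLpNorm_ne_zero volume hp hF_ne)
  refine ⟨Ioo ((‖ξ‖ + δ) / 2) (2 * (‖ξ‖ - δ)), Ioo_mem_nhds (by linarith) (by linarith), c, hc,
    fun lam ⟨⟨hlam_lower, hlam_upper⟩, hlam⟩ => ⟨f, hf_ne, hf_supp.trans fun x hx => ?_, ?_⟩⟩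
  · rw [mem_closedBall_iff_norm] at hx
    have hx_lower := norm_sub_norm_le ξ x
    rw [norm_sub_rev] at hx_lower
    constructor <;> linarith [norm_sub_norm_le x ξ]
  · rw [← hF]
    refine hle.trans' ?_
    gcongr
    exact mul_le_of_le_one_right hc.le (Real.rpow_le_one_of_one_le_of_nonpos hlam (by simp))

lemma hasLowerBoundOn_Icc (hn : n ≠ 0) (hp : p ≠ 0) (hγ : Continuous γ) (hχ : Continuous χ)
    (hχ_supp : HasCompactSupport χ) (hχ_nonneg : 0 ≤ χ) (hχ_ne : χ ≠ 0) (R : ℝ) :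
    HasLowerBoundOn p γ χ (Icc 1 R) := by
  suffices h : HasLowerBoundOn p γ χ (Icc 1 R ∩ Ici 1) by
    rwa [inter_eq_left.2 Icc_subset_Ici_self] at h
  refine isCompact_Icc.induction_on (p := fun S => HasLowerBoundOn p γ χ (S ∩ Ici 1))
    ⟨1, one_pos, by simp⟩ (fun S T hST hT => hT.mono (inter_subset_inter_left _ hST))
    (fun S T hS hT => ?_) fun r hr => ?_
  · rw [union_inter_distrib_right]
    refine hS.union hT fun lam hlam => ?_
    rw [← union_inter_distrib_right] at hlam
    exact zero_le_one.trans (mem_Ici.1 hlam.2)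
  · obtain ⟨t, ht, h⟩ := exists_mem_nhds_hasLowerBoundOn hn hp hγ hχ hχ_supp hχ_nonneg hχ_ne
      (one_pos.trans_le hr.1)
    exact ⟨t, mem_nhdsWithin_of_mem_nhds ht, h⟩

lemma exists_schwartzMap_eq_avgOp_dilation (hγ : Continuous γ) (hη : Continuous η)
    (hη_supp : HasCompactSupport η) (hη_nonneg : 0 ≤ η) {ψ : SchwartzMap (Euc n) ℂ} {ω : Euc n}
    (hω : ‖ω‖ = 1) (hψ : Function.support (𝓕 ⇑ψ) ⊆ Metric.closedBall ω (1 / 2)) {lam : ℝ}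
    (hlam : 0 < lam) :
    ∃ f : SchwartzMap (Euc n) ℂ, ⇑f = avgOp γ η (dilation lam ψ) ∧
      tsupport (𝓕 ⇑f) ⊆ {ξ : Euc n | lam / 2 ≤ ‖ξ‖ ∧ ‖ξ‖ ≤ 2 * lam} := by
  obtain ⟨h, hh⟩ := exists_schwartzMap_eq_dilation ψ hlam.ne'
  obtain ⟨f, hf, hf_fourier⟩ := exists_schwartzMap_eq_avgOp hγ hη hη_supp hη_nonneg h
  refine ⟨f, by rw [hf, hh], closure_minimal (fun ξ hξ => ?_)
    ((isClosed_le continuous_const continuous_norm).inter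
      (isClosed_le continuous_norm continuous_const))⟩
  rw [Function.mem_support, hf_fourier, hh] at hξ
  exact support_fourier_dilation_subset hω hψ hlam (right_ne_zero_of_mul hξ)

lemma exists_eLpNorm_avgOp_dilation_le (hp : 1 ≤ p) (hK : IsCompact K) (hγ : Continuous γ)
    (hc : 0 < c) (hlip : ∀ s ∈ K, ∀ t ∈ K, c * |t - s| ≤ ‖γ t - γ s‖) (hη : Continuous η)
    (hη_nonneg : 0 ≤ η) (hη_le : ∀ s, |η s| ≤ 1) (hη_supp : Function.support η ⊆ K)
    (ψ : SchwartzMap (Euc n) ℂ) :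
    ∃ A : ℝ≥0∞, A ≠ ⊤ ∧ ∀ lam > 0, eLpNorm (avgOp (-γ) η (dilation lam ψ)) p volume ≤
      A * ENNReal.ofReal (lam * (lam ^ n)⁻¹) ^ (1 / p.toReal) := by
  obtain ⟨M, hM⟩ :=
    exists_forall_norm_avgOp_dilation_le hK hγ.continuousOn hc hlip hη_le hη_supp ψ
  have := isFiniteMeasure_curveMeasure (γ := -γ)
    (hη.integrable_of_hasCompactSupport (.of_support_subset_isCompact hK hη_supp))
  have hθ : 0 ≤ 1 / p.toReal := by positivity
  have hθ' : 1 / p.toReal ≤ 1 := by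
    simpa [ENNReal.toReal_inv] using
      ENNReal.toReal_mono ENNReal.one_ne_top (ENNReal.inv_le_one.2 hp)
  refine ⟨ENNReal.ofReal M ^ (1 - 1 / p.toReal) *
    (curveMeasure (-γ) η univ * ∫⁻ y, ‖ψ y‖ₑ) ^ (1 / p.toReal), ?_, fun lam hlam => ?_⟩
  · have hψ : ∫⁻ y, ‖ψ y‖ₑ ≠ ⊤ := (ψ.integrable (μ := volume)).hasFiniteIntegral.ne
    exact ENNReal.mul_ne_top
      (ENNReal.rpow_ne_top_of_nonneg (sub_nonneg.2 hθ') ENNReal.ofReal_ne_top)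
      (ENNReal.rpow_ne_top_of_nonneg hθ (ENNReal.mul_ne_top (measure_ne_top _ _) hψ))
  · have hcont : Continuous (dilation lam ψ) := by
      obtain ⟨h, hh⟩ := exists_schwartzMap_eq_dilation ψ hlam.ne'
      exact hh ▸ h.continuous
    have hL1 := lintegral_enorm_avgOp_le hγ.neg hη hη_nonneg hcont
    rw [lintegral_enorm_dilation _ hlam, finrank_euclideanSpace_fin, mul_left_comm,
      mul_comm] at hL1
    rw [mul_assoc, ← ENNReal.mul_rpow_of_nonneg _ _ hθ]
    refine (eLpNorm_le_rpow_mul_lintegral_enorm_rpow hp (hM lam hlam)).trans ?_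
    gcongr

lemma exists_le_eLpNorm_avgOp_avgOp_dilation (hp : p ≠ 0) {ψ : Euc n → ℂ} {L : ℂ} (hL : L ≠ 0)
    (hlim : Tendsto (fun z : ℝ × Euc n =>
      avgOp γ χ (avgOp (-γ) η (dilation z.1 ψ)) (z.1⁻¹ • z.2)) (atTop ×ˢ 𝓝 0) (𝓝 L)) :
    ∃ B : ℝ≥0∞, B ≠ 0 ∧ ∀ᶠ lam in atTop,
      B * ENNReal.ofReal (lam ^ n)⁻¹ ^ (1 / p.toReal) ≤
        eLpNorm (avgOp γ χ (avgOp (-γ) η (dilation lam ψ))) p volume := by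
  have hL_pos : 0 < ‖L‖ := norm_pos_iff.2 hL
  obtain ⟨P, hP, Q, hQ, hPQ⟩ :=
    eventually_prod_iff.1 (hlim.norm.eventually (lt_mem_nhds (half_lt_self hL_pos)))
  obtain ⟨δ, hδ, hδQ⟩ := Metric.eventually_nhds_iff_ball.1 hQ
  have hθ : 0 ≤ 1 / p.toReal := by positivity
  refine ⟨ENNReal.ofReal (‖L‖ / 2) * volume (Metric.ball (0 : Euc n) δ) ^ (1 / p.toReal), ?_, ?_⟩
  · exact mul_ne_zero (ENNReal.ofReal_pos.2 (half_pos hL_pos)).ne'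
      (ENNReal.rpow_pos (Metric.measure_ball_pos _ _ hδ) measure_ball_lt_top.ne).ne'
  filter_upwards [hP, eventually_gt_atTop 0] with lam hlamP hlam
  have hvol : volume (Metric.ball (0 : Euc n) (lam⁻¹ * δ)) =
      ENNReal.ofReal (lam ^ n)⁻¹ * volume (Metric.ball (0 : Euc n) δ) := by
    rw [Measure.addHaar_ball_mul_of_pos _ _ (inv_pos.2 hlam), finrank_euclideanSpace_fin, inv_pow]
  have hlower : ∀ x ∈ Metric.ball (0 : Euc n) (lam⁻¹ * δ),
      ‖L‖ / 2 ≤ ‖avgOp γ χ (avgOp (-γ) η (dilation lam ψ)) x‖ := by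
    intro x hx
    have hx' : lam • x ∈ Metric.ball (0 : Euc n) δ := by
      rw [mem_ball_zero_iff, lt_inv_mul_iff₀ hlam] at hx
      rwa [mem_ball_zero_iff, norm_smul, Real.norm_of_nonneg hlam.le]
    simpa [inv_smul_smul₀ hlam.ne'] using (hPQ hlamP (hδQ _ hx')).le
  have hbound := ofReal_mul_measure_rpow_le_eLpNorm hp Metric.isOpen_ball.measurableSet
    (Metric.measure_ball_pos volume (0 : Euc n) (by positivity : 0 < lam⁻¹ * δ)).ne'
    (by positivity) hlower
  rwa [hvol, mul_comm (ENNReal.ofReal (lam ^ n)⁻¹), ENNReal.mul_rpow_of_nonneg _ _ hθ,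
    ← mul_assoc] at hbound

lemma hasLowerBoundAt_of_eLpNorm_le {f : SchwartzMap (Euc n) ℂ} {lam v : ℝ} (hlam : 0 < lam)
    (hv : 0 < v) (hc : 0 ≤ c) {A B : ℝ≥0∞} (hB : B ≠ 0) (hcAB : ENNReal.ofReal c * A ≤ B)
    (hf_supp : tsupport (𝓕 ⇑f) ⊆ {ξ : Euc n | lam / 2 ≤ ‖ξ‖ ∧ ‖ξ‖ ≤ 2 * lam})
    (hupper : eLpNorm f p volume ≤ A * ENNReal.ofReal (lam * v) ^ (1 / p.toReal))
    (hlower : B * ENNReal.ofReal v ^ (1 / p.toReal) ≤ eLpNorm (avgOp γ χ f) p volume) :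
    HasLowerBoundAt p γ χ c lam := by
  refine ⟨f, ?_, hf_supp, ?_⟩
  · rintro rfl
    have hne : B * ENNReal.ofReal v ^ (1 / p.toReal) ≠ 0 := mul_ne_zero hB
      (ENNReal.rpow_pos (ENNReal.ofReal_pos.2 hv) ENNReal.ofReal_ne_top).ne'
    refine hne (le_zero_iff.1 (hlower.trans_eq ?_))
    rw [FunLike.coe_zero, avgOp_zero, eLpNorm_zero]
  · have hexp : (1 / p).toReal = 1 / p.toReal := by rw [ENNReal.toReal_div, ENNReal.toReal_one]
    calc ENNReal.ofReal (c * lam ^ (-(1 / p).toReal)) * eLpNorm f p volume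
        ≤ ENNReal.ofReal (c * lam ^ (-(1 / p).toReal)) *
            (A * ENNReal.ofReal (lam * v) ^ (1 / p.toReal)) := by gcongr
      _ = ENNReal.ofReal c * A * ENNReal.ofReal v ^ (1 / p.toReal) := by
          rw [hexp, ENNReal.ofReal_mul hc, mul_mul_mul_comm,
            ofReal_rpow_neg_mul_ofReal_mul_rpow hlam v (by positivity)]
      _ ≤ B * ENNReal.ofReal v ^ (1 / p.toReal) := by gcongr
      _ ≤ eLpNorm (avgOp γ χ f) p volume := hlower

lemma exists_hasLowerBoundOn_Ici (hn : 2 ≤ n) (hp : 1 ≤ p) (hK : IsCompact K)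
    (hγ : ContDiff ℝ 1 γ) (hinj : InjOn γ K) (hreg : ∀ s ∈ K, deriv γ s ≠ 0) (hχ : Continuous χ)
    (hχ_supp : Function.support χ ⊆ K) (hχ_nonneg : 0 ≤ χ) (hχ_ne : χ ≠ 0) :
    ∃ R, HasLowerBoundOn p γ χ (Ici R) := by
  obtain ⟨c, hc, hlip⟩ := exists_mul_abs_sub_le_norm_sub hγ hK hinj hreg
  obtain ⟨ω, ψ, s₀, φ, hω, hψ, hφ_supp, hL⟩ := exists_testFunction_and_cutoff hn
    (hγ.continuous_deriv le_rfl) hreg hχ hχ_supp hχ_nonneg hχ_ne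
  have hφ_nonneg : 0 ≤ ⇑φ := fun s => φ.nonneg
  have hφ_le (s : ℝ) : |φ s| ≤ 1 := (abs_of_nonneg φ.nonneg).trans_le φ.le_one
  obtain ⟨A, hA, hupper⟩ := exists_eLpNorm_avgOp_dilation_le hp hK hγ.continuous hc hlip
    φ.continuous hφ_nonneg hφ_le hφ_supp ψ
  obtain ⟨B, hB, hlower⟩ := exists_le_eLpNorm_avgOp_avgOp_dilation (one_pos.trans_le hp).ne' hL
    (tendsto_avgOp_avgOp_dilation (hγ.differentiable one_ne_zero) hK hc hlip φ.continuous
      hφ_nonneg hφ_le hφ_supp (hχ.integrable_of_hasCompactSupport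
        (.of_support_subset_isCompact hK hχ_supp)) hχ_supp ψ)
  obtain ⟨C, hC, hCAB⟩ := exists_pos_ofReal_mul_le hA hB
  obtain ⟨R, hR⟩ := eventually_atTop.1 (hlower.and (eventually_gt_atTop 0))
  refine ⟨R, C, hC, fun lam hlamR => ?_⟩
  obtain ⟨hlam_lower, hlam⟩ := hR lam hlamR
  obtain ⟨f, hf, hf_supp⟩ := exists_schwartzMap_eq_avgOp_dilation hγ.continuous.neg φ.continuous
    φ.hasCompactSupport hφ_nonneg hω hψ hlam
  have hlam_upper := hupper lam hlam
  rw [← hf] at hlam_lower hlam_upper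
  exact hasLowerBoundAt_of_eLpNorm_le hlam (by positivity) hC.le hB hCAB hf_supp hlam_upper
    hlam_lower

end LowerBound

theorem statement5_general {n : ℕ} (hn : 2 ≤ n) {p : ℝ≥0∞} (hp : 1 ≤ p) {K : Set ℝ}
    (hK : IsCompact K) {γ : ℝ → Euc n} (hγ : ContDiff ℝ 1 γ) (hinj : InjOn γ K)
    (hreg : ∀ s ∈ K, deriv γ s ≠ 0) {χ : ℝ → ℝ} (hχ : Continuous χ)
    (hχ_supp : Function.support χ ⊆ K) (hχ_nonneg : 0 ≤ χ) (hχ_ne : χ ≠ 0) :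
    HasLowerBoundOn p γ χ (Ici 1) := by
  obtain ⟨R, hR⟩ :=
    exists_hasLowerBoundOn_Ici hn hp hK hγ hinj hreg hχ hχ_supp hχ_nonneg hχ_ne
  have hχ_compact : HasCompactSupport χ := .of_support_subset_isCompact hK hχ_supp
  have hbounded : HasLowerBoundOn p γ χ (Icc 1 R) := hasLowerBoundOn_Icc (by lia)
    (one_pos.trans_le hp).ne' hγ.continuous hχ hχ_compact hχ_nonneg hχ_ne R
  have hlarge : HasLowerBoundOn p γ χ (Ici (max 1 R)) :=
    hR.mono (Ici_subset_Ici.2 (le_max_right 1 R))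
  have hcover : Ici 1 = Icc 1 R ∪ Ici (max 1 R) := by
    ext lam
    simp only [mem_Ici, mem_union, mem_Icc, max_le_iff]
    grind
  rw [hcover]
  exact hbounded.union hlarge (hcover ▸ Ici_subset_Ici.2 zero_le_one)

/-- lower bound `sup{‖A_γ f‖_p : f ∈ Z_λ} ≳ λ^{−1/p} ‖f‖_p`
witnessing the dimensional constraint `α ≤ 1/p`. -/
theorem statement5
    (n : ℕ) (hn : 2 ≤ n)
    (p : ℝ≥0∞) (hp : 2 ≤ p)
    (a b : ℝ) (hab : a < b)
    (γ : ℝ → Euc n) (hγ : ContDiff ℝ (⊤ : ℕ∞) γ)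
    (hinj : Set.InjOn γ (Set.Icc a b))
    (hreg : ∀ s ∈ Set.Icc a b, deriv γ s ≠ 0)
    (χ : ℝ → ℝ) (hχ : ContDiff ℝ (⊤ : ℕ∞) χ) (hχc : HasCompactSupport χ)
    (hχs : tsupport χ ⊆ Set.Ioo a b)
    (hχpos : ∀ s, 0 ≤ χ s) (hχne : χ ≠ 0) :
    ∃ c : ℝ, 0 < c ∧ ∀ lam : ℝ, 1 ≤ lam →
      ∃ f : SchwartzMap (Euc n) ℂ, f ≠ 0 ∧
        tsupport (𝓕 ⇑f) ⊆ {ξ : Euc n | lam / 2 ≤ ‖ξ‖ ∧ ‖ξ‖ ≤ 2 * lam} ∧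
        ENNReal.ofReal (c * lam ^ (-(1 / p).toReal)) * eLpNorm (⇑f) p volume ≤
          eLpNorm (avgOp γ χ ⇑f) p volume :=
  statement5_general hn (one_le_two.trans hp) isCompact_Icc (hγ.of_le (by simp)) hinj hreg
    hχ.continuous ((subset_tsupport χ).trans (hχs.trans Ioo_subset_Icc_self)) hχpos hχne
end
end

section
/- Let I ⊆ ℝ be an interval, a ∈ C_c^∞(ℝ) supported in I, φ ∈ C^∞(I), R ≥ 1, and let (C_j)_{j ≥ 0} be constants ≥ 1 such that on the support of a: φ'(s) ≠ 0; |φ^{(j)}(s)| ≤ C_j R^{−(j−1)} |φ'(s)|^j for every j ≥ 2; and |a^{(j)}(s)| ≤ C_j R^{−j} |φ'(s)|^j for every j ≥ 0. Then for every N ∈ ℕ₀ there is a constant C(N), depending only on N and C₀, …, C_{N+1} (in particular independent of R, φ and a), such that |∫_ℝ e^{i φ(s)} a(s) ds| ≤ C(N) · |supp a| · R^{−N}, where |supp a| denotes the Lebesgue measure of the support of a. -/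
open MeasureTheory Set

noncomputable section

/-!
Integrating by parts against `e^{iφ} = (e^{iφ})' / (iφ')` replaces the amplitude `f` by
`i (f / φ')'`. If `‖f⁽ʲ⁾‖ ≤ K_j M (ρ |φ'|)^j` with `ρ = 1 / R`, then solving the Leibniz rule for
`f = φ' · (f / φ')` recursively bounds the derivatives of `f / φ'`, and `(f / φ')'` satisfies
bounds of the same shape with `M` replaced by `M ρ`. Each integration by parts thus gains a
factor `1 / R`.

The phase is only differentiable within the support of the amplitude. This is harmless because the
amplitude and its derivatives vanish at every point of the support that is not interior, so that
products with functions that are merely `C^n` on the support are `C^n` on the whole line.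
-/

section SupportedProducts

theorem uniqueDiffOn_tsupport {𝕜 E : Type*} [NontriviallyNormedField 𝕜] [TopologicalSpace E]
    [T1Space E] [Zero E] {f : 𝕜 → E} (hf : Continuous f) :
    UniqueDiffOn 𝕜 (tsupport f) := by
  intro x hx
  refine UniqueDiffWithinAt.closure ?_
  by_cases hxf : x ∈ Function.support f
  · exact hf.isOpen_support.uniqueDiffWithinAt hxf
  · refine AccPt.uniqueDiffWithinAt (accPt_principal_iff_clusterPt.2 ?_)
    rwa [sdiff_singleton_eq_self hxf, ← mem_closure_iff_clusterPt]

theorem eq_zero_of_notMem_interior_of_support_subset {X Y : Type*} [TopologicalSpace X]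
    [TopologicalSpace Y] [T1Space Y] [Zero Y] {S : Set X} {f : X → Y} (hf : Continuous f)
    (hfS : Function.support f ⊆ S) {x : X} (hx : x ∉ interior S) : f x = 0 :=
  Function.notMem_support.1 fun h ↦ hx (interior_maximal hfS hf.isOpen_support h)

theorem continuous_smul_of_tsupport_subset {X R M : Type*} [TopologicalSpace X]
    [TopologicalSpace R] [TopologicalSpace M] [T1Space M] [Zero M] [SMulZeroClass R M]
    [ContinuousSMul R M] {S : Set X} {p : X → R} {f : X → M} (hp : ContinuousOn p S)
    (hf : Continuous f) (hfS : tsupport f ⊆ S) : Continuous (p • f) := by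
  refine continuous_iff_continuousAt.2 fun x ↦ ?_
  by_cases hxS : x ∈ interior S
  · exact (hp.continuousAt (mem_interior_iff_mem_nhds.1 hxS)).smul hf.continuousAt
  by_cases hxf : x ∈ tsupport f
  · have hfx : f x = 0 :=
      eq_zero_of_notMem_interior_of_support_subset hf ((subset_tsupport f).trans hfS) hxS
    have on_S : ContinuousWithinAt (p • f) S x :=
      (hp x (hfS hxf)).smul hf.continuousWithinAt
    have on_compl : ContinuousWithinAt (p • f) Sᶜ x := by
      refine (continuousWithinAt_const (b := (0 : M))).congr (fun y hy ↦ ?_) (by simp [hfx])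
      simp [image_eq_zero_of_notMem_tsupport fun h ↦ hy (hfS h)]
    simpa [continuousWithinAt_univ] using on_S.union on_compl
  · refine (continuousAt_const (y := (0 : M))).congr ?_
    filter_upwards [notMem_tsupport_iff_eventuallyEq.1 hxf] with y hy
    simp [hy]

variable {𝕜 𝕜' E : Type*} [NontriviallyNormedField 𝕜] [NormedField 𝕜'] [NormedAlgebra 𝕜 𝕜']
  [NormedAddCommGroup E] [NormedSpace 𝕜 E] [NormedSpace 𝕜' E] [IsScalarTower 𝕜 𝕜' E]
  {S : Set 𝕜} {f : 𝕜 → E}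

theorem hasDerivAt_smul_of_tsupport_subset {p p' : 𝕜 → 𝕜'}
    (hp : ∀ x ∈ S, HasDerivWithinAt p (p' x) S x) (hf : ContDiff 𝕜 1 f) (hfS : tsupport f ⊆ S)
    (x : 𝕜) : HasDerivAt (p • f) (p x • deriv f x + p' x • f x) x := by
  have hf' : HasDerivAt f (deriv f x) x := (hf.differentiable one_ne_zero x).hasDerivAt
  by_cases hxS : x ∈ interior S
  · exact ((hp x (interior_subset hxS)).hasDerivAt (mem_interior_iff_mem_nhds.1 hxS)).smul hf'
  have hfx : f x = 0 := eq_zero_of_notMem_interior_of_support_subset hf.continuous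
    ((subset_tsupport f).trans hfS) hxS
  have hf'x : deriv f x = 0 := eq_zero_of_notMem_interior_of_support_subset
    hf.continuous_deriv_one (support_deriv_subset.trans hfS) hxS
  by_cases hxf : x ∈ tsupport f
  · have on_S : HasDerivWithinAt (p • f) (p x • deriv f x + p' x • f x) S x :=
      (hp x (hfS hxf)).smul hf'.hasDerivWithinAt
    have on_compl : HasDerivWithinAt (p • f) (p x • deriv f x + p' x • f x) Sᶜ x := by
      simp only [hfx, hf'x, smul_zero, add_zero]
      refine (hasDerivWithinAt_const x Sᶜ (0 : E)).congr (fun y hy ↦ ?_) (by simp [hfx])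
      simp [image_eq_zero_of_notMem_tsupport fun h ↦ hy (hfS h)]
    simpa using on_S.union on_compl
  · rw [hfx, hf'x, smul_zero, smul_zero, add_zero]
    exact HasDerivAt.of_notMem_tsupport fun h ↦ hxf (tsupport_smul_subset_right p f h)

theorem contDiff_smul_of_tsupport_subset (hS : UniqueDiffOn 𝕜 S) {p : 𝕜 → 𝕜'} {n : ℕ}
    (hp : ContDiffOn 𝕜 n p S) (hf : ContDiff 𝕜 n f) (hfS : tsupport f ⊆ S) :
    ContDiff 𝕜 n (p • f) := by
  induction n generalizing p f with
  | zero =>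
    rw [Nat.cast_zero, contDiff_zero] at hf ⊢
    exact continuous_smul_of_tsupport_subset hp.continuousOn hf hfS
  | succ n ih =>
    rw [Nat.cast_succ] at hp hf ⊢
    obtain ⟨hp_diff, -, hp_deriv⟩ := (contDiffOn_succ_iff_derivWithin hS).1 hp
    obtain ⟨-, -, hf_deriv⟩ := contDiff_succ_iff_deriv.1 hf
    have hderiv := hasDerivAt_smul_of_tsupport_subset
      (fun x hx ↦ (hp_diff x hx).hasDerivWithinAt) (hf.of_le le_add_self) hfS
    refine contDiff_succ_iff_deriv.2
      ⟨fun x ↦ (hderiv x).differentiableAt, by simp, ?_⟩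
    rw [funext fun x ↦ (hderiv x).deriv]
    exact (ih (hp.of_le le_self_add) hf_deriv (tsupport_deriv_subset.trans hfS)).add
      (ih hp_deriv (hf.of_le le_self_add) hfS)

end SupportedProducts

section QuotientBounds

/-- If the derivatives of `ψ` and `f` at a point satisfy `|ψ⁽ⁱ⁾| ≤ C (i + 1) tⁱ |ψ|` and
`‖f⁽ʲ⁾‖ ≤ K j M tʲ`, then `quotientConst C K j` is the constant in the resulting bound
`|ψ| ‖(f / ψ)⁽ʲ⁾‖ ≤ quotientConst C K j * M tʲ`. The shift in `C` is that of `ψ = φ'`. -/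
def quotientConst (C K : ℕ → ℝ) (j : ℕ) : ℝ :=
  K j + ∑ i : Fin j, j.choose (i + 1) * C (i + 2) * quotientConst C K (j - (i + 1))
termination_by j
decreasing_by have := i.isLt; omega

theorem quotientConst_eq_add_sum_range (C K : ℕ → ℝ) (j : ℕ) :
    quotientConst C K j = K j + ∑ i ∈ Finset.range j,
      j.choose (i + 1) * C (i + 2) * quotientConst C K (j - (i + 1)) := by
  rw [quotientConst, Finset.sum_range]

theorem norm_mul_norm_le_quotientConst_of_leibniz {𝕜 E : Type*} [NormedField 𝕜]
    [NormedAddCommGroup E] [NormedSpace 𝕜 E] {ψ : ℕ → 𝕜} {f q : ℕ → E} {C K : ℕ → ℝ} {M t : ℝ}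
    {n : ℕ}
    (leibniz : ∀ j ≤ n, f j = ∑ i ∈ Finset.range (j + 1), j.choose i • ψ i • q (j - i))
    (hψ₀ : ψ 0 ≠ 0) (hψ : ∀ i, 1 ≤ i → i ≤ n → ‖ψ i‖ ≤ C (i + 1) * t ^ i * ‖ψ 0‖)
    (hf : ∀ j ≤ n, ‖f j‖ ≤ K j * M * t ^ j) {j : ℕ} (hj : j ≤ n) :
    ‖ψ 0‖ * ‖q j‖ ≤ quotientConst C K j * M * t ^ j := by
  induction j using Nat.strong_induction_on with
  | _ j ih =>
    have solve : ψ 0 • q j =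
        f j - ∑ i ∈ Finset.range j, j.choose (i + 1) • ψ (i + 1) • q (j - (i + 1)) := by
      rw [leibniz j hj, Finset.sum_range_succ']
      simp
    have term_le : ∀ i ∈ Finset.range j,
        ‖j.choose (i + 1) • ψ (i + 1) • q (j - (i + 1))‖ ≤
          j.choose (i + 1) * C (i + 2) * quotientConst C K (j - (i + 1)) * (M * t ^ j) := by
      intro i hi
      have hij : i + 1 ≤ j := Finset.mem_range.1 hi
      have hψi := hψ (i + 1) (by omega) (by omega)
      have hCt : 0 ≤ C (i + 2) * t ^ (i + 1) :=
        nonneg_of_mul_nonneg_left ((norm_nonneg _).trans hψi) (norm_pos_iff.2 hψ₀)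
      calc ‖j.choose (i + 1) • ψ (i + 1) • q (j - (i + 1))‖
          ≤ j.choose (i + 1) * (‖ψ (i + 1)‖ * ‖q (j - (i + 1))‖) := by
            rw [← norm_smul]; exact norm_nsmul_le
        _ ≤ j.choose (i + 1) * (C (i + 2) * t ^ (i + 1) * ‖ψ 0‖ * ‖q (j - (i + 1))‖) := by
            gcongr
        _ ≤ j.choose (i + 1) * (C (i + 2) * t ^ (i + 1) *
              (quotientConst C K (j - (i + 1)) * M * t ^ (j - (i + 1)))) := by
            rw [mul_assoc _ ‖ψ 0‖]
            exact mul_le_mul_of_nonneg_left (mul_le_mul_of_nonneg_left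
              (ih (j - (i + 1)) (by omega) (by omega)) hCt) (Nat.cast_nonneg _)
        _ = _ := by
            rw [← pow_mul_pow_sub t hij]
            ring
    calc ‖ψ 0‖ * ‖q j‖ = ‖ψ 0 • q j‖ := (norm_smul _ _).symm
      _ ≤ ‖f j‖ + ∑ i ∈ Finset.range j, ‖j.choose (i + 1) • ψ (i + 1) • q (j - (i + 1))‖ := by
          rw [solve]
          exact (norm_sub_le _ _).trans (by gcongr; exact norm_sum_le _ _)
      _ ≤ K j * M * t ^ j + ∑ i ∈ Finset.range j,
            j.choose (i + 1) * C (i + 2) * quotientConst C K (j - (i + 1)) * (M * t ^ j) :=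
          add_le_add (hf j hj) (Finset.sum_le_sum term_le)
      _ = quotientConst C K j * M * t ^ j := by
          rw [← Finset.sum_mul, quotientConst_eq_add_sum_range]
          ring

end QuotientBounds

section NonstationaryPhase

variable {E : Type*} [NormedAddCommGroup E] [NormedSpace ℂ E] {φ : ℝ → ℝ} {T : Set ℝ}
  {C K : ℕ → ℝ} {ρ M : ℝ} {m n : ℕ} {f : ℝ → E}

/-- The quotient `f / φ'` of an amplitude by the derivative of the phase, which is taken within a
set `T` containing the support of `f`; off the support the quotient is `0`. -/
def phaseQuotient (φ : ℝ → ℝ) (T : Set ℝ) (f : ℝ → E) : ℝ → E :=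
  (derivWithin φ T)⁻¹ • f

theorem tsupport_phaseQuotient_subset : tsupport (phaseQuotient φ T f) ⊆ tsupport f :=
  tsupport_smul_subset_right _ _

theorem derivWithin_smul_phaseQuotient (hφ : ∀ s ∈ T, derivWithin φ T s ≠ 0)
    (hf : tsupport f ⊆ T) : derivWithin φ T • phaseQuotient φ T f = f := by
  ext s
  by_cases hs : s ∈ T
  · exact smul_inv_smul₀ (hφ s hs) (f s)
  · simp [phaseQuotient, image_eq_zero_of_notMem_tsupport fun h ↦ hs (hf h)]

theorem contDiff_phaseQuotient (hT : UniqueDiffOn ℝ T) (hφ : ContDiffOn ℝ (n + 1) φ T)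
    (hφ' : ∀ s ∈ T, derivWithin φ T s ≠ 0) (hf : ContDiff ℝ n f) (hfT : tsupport f ⊆ T) :
    ContDiff ℝ n (phaseQuotient φ T f) :=
  contDiff_smul_of_tsupport_subset hT ((hφ.derivWithin hT le_rfl).inv hφ') hf hfT

theorem iteratedDeriv_eq_sum_smul_iteratedDeriv_phaseQuotient (hT : UniqueDiffOn ℝ T)
    (hφ : ContDiffOn ℝ (n + 1) φ T) (hφ' : ∀ s ∈ T, derivWithin φ T s ≠ 0) (hf : ContDiff ℝ n f)
    (hfT : tsupport f ⊆ T) {s : ℝ} (hs : s ∈ T) :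
    iteratedDeriv n f s = ∑ i ∈ Finset.range (n + 1),
      n.choose i • iteratedDerivWithin (i + 1) φ T s •
        iteratedDeriv (n - i) (phaseQuotient φ T f) s := by
  have hq : ContDiff ℝ n (phaseQuotient φ T f) := contDiff_phaseQuotient hT hφ hφ' hf hfT
  have hq_deriv (i : ℕ) (hi : i ≤ n) : iteratedDerivWithin i (phaseQuotient φ T f) T s =
      iteratedDeriv i (phaseQuotient φ T f) s :=
    iteratedDerivWithin_eq_iteratedDeriv hT (hq.contDiffAt.of_le (by exact_mod_cast hi)) hs
  calc iteratedDeriv n f s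
      = iteratedDerivWithin n (derivWithin φ T • phaseQuotient φ T f) T s := by
        rw [derivWithin_smul_phaseQuotient hφ' hfT,
          iteratedDerivWithin_eq_iteratedDeriv hT hf.contDiffAt hs]
    _ = _ := by
        rw [iteratedDerivWithin_smul hs hT (hφ.derivWithin hT le_rfl s hs) hq.contDiffWithinAt]
        refine Finset.sum_congr rfl fun i _ ↦ ?_
        rw [hq_deriv _ (Nat.sub_le n i), iteratedDerivWithin_succ']

theorem hasDerivWithinAt_exp_I_mul_ofReal {φ' s : ℝ} (hφ : HasDerivWithinAt φ φ' T s) :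
    HasDerivWithinAt (fun s ↦ Complex.exp (Complex.I * φ s))
      (Complex.exp (Complex.I * φ s) * (Complex.I * φ')) T s :=
  (hφ.ofReal_comp.const_mul Complex.I).cexp

theorem integrable_exp_smul_of_tsupport_subset (hT : IsCompact T) (hφ : ContinuousOn φ T)
    (hf : Continuous f) (hfT : tsupport f ⊆ T) :
    Integrable fun s ↦ Complex.exp (Complex.I * φ s) • f s := by
  have hexp : ContinuousOn (fun s ↦ Complex.exp (Complex.I * φ s)) T := by fun_prop
  exact (continuous_smul_of_tsupport_subset hexp hf hfT).integrable_of_hasCompactSupport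
    (hT.of_isClosed_subset isClosed_closure ((tsupport_smul_subset_right _ _).trans hfT))

theorem integral_exp_smul_eq_I_smul_integral_deriv_phaseQuotient (hT : IsCompact T)
    (hT' : UniqueDiffOn ℝ T) (hφ : ContDiffOn ℝ 2 φ T) (hφ' : ∀ s ∈ T, derivWithin φ T s ≠ 0)
    (hf : ContDiff ℝ 1 f) (hfT : tsupport f ⊆ T) :
    ∫ s, Complex.exp (Complex.I * φ s) • f s =
      Complex.I • ∫ s, Complex.exp (Complex.I * φ s) • deriv (phaseQuotient φ T f) s := by
  set q := phaseQuotient φ T f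
  have hq : ContDiff ℝ 1 q := contDiff_phaseQuotient (n := 1) hT' hφ hφ' hf hfT
  have hqT : tsupport q ⊆ T := tsupport_phaseQuotient_subset.trans hfT
  have hderiv (s : ℝ) : HasDerivAt (fun s ↦ Complex.exp (Complex.I * φ s) • q s)
      (Complex.exp (Complex.I * φ s) • deriv q s +
        Complex.I • Complex.exp (Complex.I * φ s) • f s) s := by
    have hexp := fun s hs ↦ hasDerivWithinAt_exp_I_mul_ofReal
      ((hφ.differentiableOn two_ne_zero) s hs).hasDerivWithinAt
    refine (hasDerivAt_smul_of_tsupport_subset hexp hq hqT s).congr_deriv ?_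
    rw [← derivWithin_smul_phaseQuotient hφ' hfT]
    simp only [Pi.smul_apply', ← Complex.coe_smul, smul_smul, q]
    ring_nf
  have hf_int := integrable_exp_smul_of_tsupport_subset hT hφ.continuousOn hf.continuous hfT
  have hIf_int : Integrable fun s ↦ Complex.I • Complex.exp (Complex.I * φ s) • f s :=
    hf_int.smul Complex.I
  have hq_int := integrable_exp_smul_of_tsupport_subset hT hφ.continuousOn hq.continuous hqT
  have hq'_int := integrable_exp_smul_of_tsupport_subset hT hφ.continuousOn
    hq.continuous_deriv_one (tsupport_deriv_subset.trans hqT)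
  have hzero := integral_eq_zero_of_hasDerivAt_of_integrable hderiv
    (hq'_int.add hIf_int) hq_int
  rw [integral_add hq'_int hIf_int, integral_smul] at hzero
  rw [eq_neg_of_add_eq_zero_left hzero, smul_neg, smul_smul, Complex.I_mul_I, neg_one_smul, neg_neg]

/-- A phase of class `C^(n + 1)` on `T` without stationary points, whose derivatives are controlled
by the first one at scale `ρ = 1 / R`. The bound on `φ⁽ʲ⁾` is indexed by `i = j - 1`. -/
structure IsNonstationaryPhase (φ : ℝ → ℝ) (T : Set ℝ) (C : ℕ → ℝ) (ρ : ℝ) (n : ℕ) : Prop where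
  uniqueDiffOn : UniqueDiffOn ℝ T
  contDiffOn : ContDiffOn ℝ (n + 1) φ T
  derivWithin_ne_zero : ∀ s ∈ T, derivWithin φ T s ≠ 0
  abs_iteratedDerivWithin_le : ∀ i, 1 ≤ i → i ≤ n → ∀ s ∈ T,
    |iteratedDerivWithin (i + 1) φ T s| ≤
      C (i + 1) * (ρ * |derivWithin φ T s|) ^ i * |derivWithin φ T s|

/-- An amplitude of class `C^n` supported in `T`, whose derivatives are controlled by those of the
phase `φ` at scale `ρ = 1 / R`. The overall size `M` collects the powers of `ρ` gained by
integrating by parts. -/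
structure IsAmplitude (φ : ℝ → ℝ) (T : Set ℝ) (K : ℕ → ℝ) (ρ M : ℝ) (n : ℕ) (f : ℝ → E) :
    Prop where
  contDiff : ContDiff ℝ n f
  tsupport_subset : tsupport f ⊆ T
  norm_iteratedDeriv_le : ∀ j ≤ n, ∀ s ∈ T,
    ‖iteratedDeriv j f s‖ ≤ K j * M * (ρ * |derivWithin φ T s|) ^ j

theorem IsNonstationaryPhase.mono (hφ : IsNonstationaryPhase φ T C ρ n) (hmn : m ≤ n) :
    IsNonstationaryPhase φ T C ρ m where
  uniqueDiffOn := hφ.uniqueDiffOn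
  contDiffOn := hφ.contDiffOn.of_le (by gcongr)
  derivWithin_ne_zero := hφ.derivWithin_ne_zero
  abs_iteratedDerivWithin_le i hi him := hφ.abs_iteratedDerivWithin_le i hi (him.trans hmn)

theorem IsAmplitude.abs_mul_norm_iteratedDeriv_phaseQuotient_le
    (hφ : IsNonstationaryPhase φ T C ρ n) (hf : IsAmplitude φ T K ρ M n f)
    {s : ℝ} (hs : s ∈ T) {j : ℕ} (hj : j ≤ n) :
    |derivWithin φ T s| * ‖iteratedDeriv j (phaseQuotient φ T f) s‖ ≤
      quotientConst C K j * M * (ρ * |derivWithin φ T s|) ^ j := by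
  simpa only [zero_add, iteratedDerivWithin_one, Real.norm_eq_abs] using
    norm_mul_norm_le_quotientConst_of_leibniz
      (ψ := fun i ↦ iteratedDerivWithin (i + 1) φ T s) (f := fun j ↦ iteratedDeriv j f s)
      (q := fun j ↦ iteratedDeriv j (phaseQuotient φ T f) s)
      (fun j hj ↦ iteratedDeriv_eq_sum_smul_iteratedDeriv_phaseQuotient hφ.uniqueDiffOn
        (hφ.mono hj).contDiffOn hφ.derivWithin_ne_zero
        (hf.contDiff.of_le (by exact_mod_cast hj)) hf.tsupport_subset hs)
      (by simpa [iteratedDerivWithin_one] using hφ.derivWithin_ne_zero s hs)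
      (fun i hi hin ↦ by
        simpa [iteratedDerivWithin_one] using hφ.abs_iteratedDerivWithin_le i hi hin s hs)
      (fun j hj ↦ hf.norm_iteratedDeriv_le j hj s hs) hj

theorem IsAmplitude.deriv_phaseQuotient (hφ : IsNonstationaryPhase φ T C ρ (n + 1))
    (hf : IsAmplitude φ T K ρ M (n + 1) f) :
    IsAmplitude φ T (fun j ↦ quotientConst C K (j + 1)) ρ (M * ρ) n
      (deriv (phaseQuotient φ T f)) where
  contDiff := (contDiff_succ_iff_deriv.1 (contDiff_phaseQuotient hφ.uniqueDiffOn hφ.contDiffOn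
    hφ.derivWithin_ne_zero hf.contDiff hf.tsupport_subset)).2.2
  tsupport_subset :=
    tsupport_deriv_subset.trans (tsupport_phaseQuotient_subset.trans hf.tsupport_subset)
  norm_iteratedDeriv_le j hj s hs := by
    rw [← iteratedDeriv_succ']
    refine le_of_mul_le_mul_left ?_ (abs_pos.2 (hφ.derivWithin_ne_zero s hs))
    calc _ ≤ _ := hf.abs_mul_norm_iteratedDeriv_phaseQuotient_le hφ hs (Nat.add_le_add_right hj 1)
      _ = _ := by ring

theorem IsAmplitude.norm_integral_exp_smul_le (hφ : IsNonstationaryPhase φ T C ρ n)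
    (hT : IsCompact T) (hf : IsAmplitude φ T K ρ M n f) :
    ‖∫ s, Complex.exp (Complex.I * φ s) • f s‖ ≤
      ((fun K j ↦ quotientConst C K (j + 1))^[n] K) 0 * (M * ρ ^ n) * volume.real T := by
  induction n generalizing f K M with
  | zero =>
    rw [← setIntegral_eq_integral_of_forall_compl_eq_zero (s := T) fun s hs ↦ by
      rw [image_eq_zero_of_notMem_tsupport fun h ↦ hs (hf.tsupport_subset h), smul_zero]]
    refine norm_setIntegral_le_of_norm_le_const hT.measure_lt_top fun s hs ↦ ?_
    rw [norm_smul, Complex.norm_exp_I_mul_ofReal, one_mul]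
    simpa using hf.norm_iteratedDeriv_le 0 le_rfl s hs
  | succ n ih =>
    have hφ₂ : ContDiffOn ℝ 2 φ T := (hφ.mono n.succ_pos).contDiffOn
    have hf₁ : ContDiff ℝ 1 f := hf.contDiff.of_le (by exact_mod_cast n.succ_pos)
    rw [integral_exp_smul_eq_I_smul_integral_deriv_phaseQuotient hT hφ.uniqueDiffOn hφ₂
      hφ.derivWithin_ne_zero hf₁ hf.tsupport_subset, norm_smul, Complex.norm_I, one_mul,
      Function.iterate_succ_apply, pow_succ', ← mul_assoc M]
    exact ih (hφ.mono n.le_succ) (hf.deriv_phaseQuotient hφ)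

end NonstationaryPhase

theorem uniqueDiffOn_of_ordConnected_of_tsupport_subset {E : Type*} [TopologicalSpace E] [T1Space E]
    [Zero E] {f : ℝ → E} {I : Set ℝ} (hI : I.OrdConnected) (hf : Continuous f)
    (hfI : tsupport f ⊆ I) (hne : (tsupport f).Nonempty) : UniqueDiffOn ℝ I :=
  uniqueDiffOn_convex hI.convex <| (closure_nonempty_iff.1 hne).mono <|
    interior_maximal ((subset_tsupport f).trans hfI) hf.isOpen_support

theorem iteratedDerivWithin_tsupport_eq {E F : Type*} [TopologicalSpace E] [T1Space E] [Zero E]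
    [NormedAddCommGroup F] [NormedSpace ℝ F] {f : ℝ → E} {g : ℝ → F} {I : Set ℝ} {n : ℕ} {s : ℝ}
    (hI : I.OrdConnected) (hg : ContDiffOn ℝ n g I) (hf : Continuous f) (hfI : tsupport f ⊆ I)
    (hs : s ∈ tsupport f) :
    iteratedDerivWithin n g (tsupport f) s = iteratedDerivWithin n g I s := by
  simp only [iteratedDerivWithin]
  rw [iteratedFDerivWithin_subset hfI (uniqueDiffOn_tsupport hf)
    (uniqueDiffOn_of_ordConnected_of_tsupport_subset hI hf hfI ⟨s, hs⟩) hg hs]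

theorem rpow_neg_natCast_eq_inv_pow {R : ℝ} (hR : 0 ≤ R) (n : ℕ) : R ^ (-(n : ℝ)) = R⁻¹ ^ n := by
  rw [Real.rpow_neg hR, Real.rpow_natCast, inv_pow]

theorem statement18_general {E : Type*} [NormedAddCommGroup E] [NormedSpace ℂ E] [CompleteSpace E]
    (C : ℕ → ℝ) (N : ℕ) :
    ∃ K : ℝ, 0 < K ∧
    ∀ a : ℝ → E, ContDiff ℝ N a → HasCompactSupport a →
    ∀ φ : ℝ → ℝ, ContDiffOn ℝ (N + 1) φ (tsupport a) →
    ∀ R : ℝ, 0 < R →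
      (∀ s ∈ tsupport a, iteratedDerivWithin 1 φ (tsupport a) s ≠ 0) →
      (∀ j : ℕ, 2 ≤ j → j ≤ N + 1 → ∀ s ∈ tsupport a,
        |iteratedDerivWithin j φ (tsupport a) s| ≤
          C j * R ^ (-((j : ℝ) - 1)) * |iteratedDerivWithin 1 φ (tsupport a) s| ^ j) →
      (∀ j ≤ N, ∀ s ∈ tsupport a, ‖iteratedDeriv j a s‖ ≤
          C j * R ^ (-(j : ℝ)) * |iteratedDerivWithin 1 φ (tsupport a) s| ^ j) →
      ‖∫ s : ℝ, Complex.exp (Complex.I * (φ s : ℂ)) • a s‖ ≤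
        K * (volume (tsupport a)).toReal * R ^ (-(N : ℝ)) := by
  set L : ℝ := ((fun K j ↦ quotientConst C K (j + 1))^[N] C) 0
  refine ⟨max L 1, by positivity, fun a ha ha_cpt φ hφ R hR hφ' hφ_bound ha_bound ↦ ?_⟩
  simp only [iteratedDerivWithin_one] at hφ' hφ_bound ha_bound
  have phase : IsNonstationaryPhase φ (tsupport a) C R⁻¹ N :=
    { uniqueDiffOn := uniqueDiffOn_tsupport ha.continuous
      contDiffOn := hφ
      derivWithin_ne_zero := hφ'
      abs_iteratedDerivWithin_le i hi hiN s hs := by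
        convert hφ_bound (i + 1) (by omega) (by omega) s hs using 1
        rw [Nat.cast_succ, add_sub_cancel_right, rpow_neg_natCast_eq_inv_pow hR.le]
        ring }
  have amplitude : IsAmplitude φ (tsupport a) C R⁻¹ 1 N a :=
    { contDiff := ha
      tsupport_subset := subset_rfl
      norm_iteratedDeriv_le j hj s hs := by
        convert ha_bound j hj s hs using 1
        rw [rpow_neg_natCast_eq_inv_pow hR.le, mul_one, mul_pow, mul_assoc] }
  calc _ ≤ L * (1 * R⁻¹ ^ N) * volume.real (tsupport a) :=
        amplitude.norm_integral_exp_smul_le phase ha_cpt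
    _ ≤ max L 1 * (1 * R⁻¹ ^ N) * volume.real (tsupport a) := by
        gcongr
        exact le_max_left L 1
    _ = _ := by
        rw [rpow_neg_natCast_eq_inv_pow hR.le, measureReal_def]
        ring

/-- the non-stationary phase lemma.  Under the derivative bounds on the
support of `a`, `|∫ e^{iφ(s)} a(s) ds| ≤ C(N) |supp a| R^{−N}` with `C(N)` independent of
`R`, `φ`, `a` and the interval `I`. -/
theorem statement18 (C : ℕ → ℝ) (hC : ∀ j, 1 ≤ C j) (N : ℕ) :
    ∃ K : ℝ, 0 < K ∧
    ∀ I : Set ℝ, I.OrdConnected →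
    ∀ φ : ℝ → ℝ, ContDiffOn ℝ (⊤ : ℕ∞) φ I →
    ∀ a : ℝ → ℂ, ContDiff ℝ (⊤ : ℕ∞) a → HasCompactSupport a → tsupport a ⊆ I →
    ∀ R : ℝ, 1 ≤ R →
      (∀ s ∈ tsupport a, iteratedDerivWithin 1 φ I s ≠ 0) →
      (∀ j : ℕ, 2 ≤ j → ∀ s ∈ tsupport a,
        |iteratedDerivWithin j φ I s| ≤
          C j * R ^ (-((j : ℝ) - 1)) * |iteratedDerivWithin 1 φ I s| ^ j) →
      (∀ j : ℕ, ∀ s ∈ tsupport a,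
        ‖iteratedDeriv j a s‖ ≤ C j * R ^ (-(j : ℝ)) * |iteratedDerivWithin 1 φ I s| ^ j) →
      ‖∫ s : ℝ, Complex.exp (Complex.I * (φ s : ℂ)) * a s‖ ≤
        K * (volume (tsupport a)).toReal * R ^ (-(N : ℝ)) := by
  obtain ⟨K, hK, bound⟩ := statement18_general C N (E := ℂ)
  refine ⟨K, hK, fun I hI φ hφ a ha ha_cpt haI R hR hφ' hφ_bound ha_bound ↦ ?_⟩
  have hD (j : ℕ) {s : ℝ} (hs : s ∈ tsupport a) :
      iteratedDerivWithin j φ (tsupport a) s = iteratedDerivWithin j φ I s :=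
    iteratedDerivWithin_tsupport_eq hI (hφ.of_le (mod_cast le_top)) ha.continuous haI hs
  exact bound a (ha.of_le (mod_cast le_top)) ha_cpt φ ((hφ.of_le (mod_cast le_top)).mono haI) R
    (one_pos.trans_le hR) (fun s hs ↦ by simpa only [hD _ hs] using hφ' s hs)
    (fun j hj _ s hs ↦ by simpa only [hD _ hs] using hφ_bound j hj s hs)
    (fun j _ s hs ↦ by simpa only [hD _ hs] using ha_bound j s hs)
end
end
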